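/- Let H be a pointed Hopf algebra of discrete corepresentation type over an algebraically closed field K, and let B be the link-indecomposable component of H containing 1 (which is a Hopf subalgebra). Then the Ext-quiver Q of the category of right B-comodules is one of the following: (1) a single vertex, and G(B) = {1}; (2) a complete oriented cycle, and G(B) = ⟨a | aⁿ = 1⟩; (3) the doubly infinite linear quiver ··· → · → · → · → ···, and G(B) = ⟨a⟩ infinite cyclic; (4) the (folded) grid quiver Q^{m,n}, and G(B) = ⟨a,b | ab = ba, aᵐ = bⁿ⟩ for some pair of integers (m,n) ≠ ±(1,1). Moreover, the Ext-quiver of the category of right H-comodules is a (possibly infinite) disjoint union of copies of this quiver. -/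

import Mathlib

open TensorProduct



section Basic

variable (K : Type) [CommRing K] (H : Type) [AddCommGroup H] [Module K H] [Coalgebra K H]

/-- A grouplike element of a coalgebra. -/
def IsGrouplike (g : H) : Prop :=
  Coalgebra.counit (R := K) g = 1 ∧ Coalgebra.comul (R := K) g = g ⊗ₜ[K] g

/-- The space `P(g,h)` of `(g,h)`-skew primitive elements. -/
noncomputable def skewPrim (g h : H) : Submodule K H :=
  LinearMap.ker (Coalgebra.comul (R := K) (A := H)
    - (TensorProduct.mk K H H g + (TensorProduct.mk K H H).flip h))

lemma mem_skewPrim {g h x : H} :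
    x ∈ skewPrim K H g h ↔ Coalgebra.comul (R := K) x = g ⊗ₜ[K] x + x ⊗ₜ[K] h := by
  rw [skewPrim, LinearMap.mem_ker, LinearMap.sub_apply, sub_eq_zero, LinearMap.add_apply]
  rfl

/-- A submodule which is a subcoalgebra. -/
def IsSubcoalgebra (D : Submodule K H) : Prop :=
  ∀ x ∈ D, Coalgebra.comul (R := K) x ∈ LinearMap.range (TensorProduct.map D.subtype D.subtype)

/-- A coalgebra is pointed if every simple subcoalgebra is one-dimensional. -/
def IsPointedCoalgebra : Prop :=
  ∀ D : Submodule K H, IsSubcoalgebra K H D → D ≠ ⊥ →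
    (∀ D' : Submodule K H, IsSubcoalgebra K H D' → D' ≤ D → D' = ⊥ ∨ D' = D) →
    Module.finrank K ↥D = 1

end Basic

section Comodules

variable (K : Type) [CommRing K] (H : Type) [AddCommGroup H] [Module K H] [Coalgebra K H]

/-- A (finite or infinite dimensional) right `H`-comodule. -/
structure Comod where
  carrier : Type
  [acg : AddCommGroup carrier]
  [mod : Module K carrier]
  ρ : carrier →ₗ[K] carrier ⊗[K] H
  counit_comp : ∀ m : carrier,
    (TensorProduct.rid K carrier)
      ((LinearMap.lTensor carrier (Coalgebra.counit (R := K) (A := H))) (ρ m)) = m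
  coassoc : ∀ m : carrier,
    (LinearMap.lTensor carrier (Coalgebra.comul (R := K) (A := H))) (ρ m)
      = (TensorProduct.assoc K carrier H H) ((LinearMap.rTensor H ρ) (ρ m))

attribute [instance] Comod.acg Comod.mod

/-- A morphism of right `H`-comodules. -/
structure ComodHom (M N : Comod K H) where
  toLin : M.carrier →ₗ[K] N.carrier
  compat : ∀ m : M.carrier, N.ρ (toLin m) = (LinearMap.rTensor H toLin) (M.ρ m)

/-- Isomorphism of comodules. -/
def ComodIso (M N : Comod K H) : Prop :=
  ∃ f : ComodHom K H M N, Function.Bijective f.toLin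

/-- An indecomposable comodule: it is nonzero, and (equivalently to the usual definition,
since idempotents split in comodule categories) every idempotent endomorphism is `0` or `1`. -/
def Comod.Indec (M : Comod K H) : Prop :=
  (∃ m : M.carrier, m ≠ 0) ∧
    ∀ f : ComodHom K H M M, f.toLin ∘ₗ f.toLin = f.toLin →
      f.toLin = 0 ∨ f.toLin = LinearMap.id

/-- A submodule of a comodule which is a subcomodule. -/
def IsSubcomod (M : Comod K H) (N : Submodule K M.carrier) : Prop :=
  ∀ m ∈ N, M.ρ m ∈ LinearMap.range (LinearMap.rTensor H N.subtype)

/-- The coaction of `M` factors through the subcoalgebra `D`, i.e. `M` is a `D`-comodule. -/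
def CoactsThrough (M : Comod K H) (D : Submodule K H) : Prop :=
  ∀ m : M.carrier, M.ρ m ∈ LinearMap.range (LinearMap.lTensor M.carrier D.subtype)

/-- `M` has dimension vector `d` : it admits a composition series whose successive quotients
are the one-dimensional comodules associated to grouplike elements, where for every `h` the
grouplike `h` occurs exactly `d h` times. -/
def HasDimVector (M : Comod K H) (d : H → ℕ) : Prop :=
  ∃ (k : ℕ) (F : Fin (k+1) → Submodule K M.carrier) (g : Fin k → H),
    F 0 = ⊥ ∧ F (Fin.last k) = ⊤ ∧
    (∀ i : Fin k, F i.castSucc ≤ F i.succ) ∧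
    (∀ i : Fin (k+1), IsSubcomod K H M (F i)) ∧
    (∀ i : Fin k, IsGrouplike K H (g i)) ∧
    (∀ i : Fin k, ∃ m : M.carrier, m ∈ F i.succ ∧ m ∉ F i.castSucc ∧
        F i.succ = F i.castSucc ⊔ Submodule.span K {m}) ∧
    (∀ i : Fin k, ∀ m ∈ F i.succ,
        M.ρ m - m ⊗ₜ[K] (g i) ∈ LinearMap.range (LinearMap.rTensor H (F i.castSucc).subtype)) ∧
    (∀ h : H, d h = Nat.card {i : Fin k // g i = h})

/-- A pointed coalgebra is of discrete corepresentation type if for every dimension vector `d`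
there are only finitely many isomorphism classes of indecomposable comodules with
dimension vector `d`. -/
def DiscreteCorepType : Prop :=
  ∀ d : H → ℕ, ∃ (N : ℕ) (R : Fin N → Comod K H),
    ∀ M : Comod K H, M.Indec K H → HasDimVector K H M d → ∃ i, ComodIso K H M (R i)

/-- A subcoalgebra `D ≤ H` is of finite corepresentation type: there are only finitely many
isomorphism classes of finite-dimensional indecomposable comodules whose coaction factors
through `D`. -/
def FinCorepTypeOn (D : Submodule K H) : Prop :=
  ∃ (N : ℕ) (R : Fin N → Comod K H),
    ∀ M : Comod K H, M.Indec K H → Module.Finite K M.carrier → CoactsThrough K H M D →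
      ∃ i, ComodIso K H M (R i)

/-- A coalgebra is of finite corepresentation type. -/
def FinCorepType : Prop := FinCorepTypeOn K H ⊤

end Comodules

open scoped Classical

section Pointed

variable (K : Type) [CommRing K] (H : Type) [Ring H] [Bialgebra K H]

/-- `g` is a grouplike element belonging to the subcoalgebra `B`. -/
def grouplikeIn (B : Submodule K H) (g : H) : Prop := IsGrouplike K H g ∧ g ∈ B

/-- In the Ext-quiver of the subcoalgebra `B`, there are exactly `c` arrows from the
grouplike `g` to the grouplike `h` : since the trivial skew primitive `g - h` is nonzero
precisely when `g ≠ h`, this says `dim (P(g,h) ⊓ B) = c + 1` for `g ≠ h`, and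
`dim (P(g,g) ⊓ B) = c` for loops. -/
def arrowsEq (B : Submodule K H) (g h : H) (c : ℕ) : Prop :=
  Module.rank K ↥(skewPrim K H g h ⊓ B) = if g = h then (c : Cardinal) else (c : Cardinal) + 1

/-- The number of arrows from `g` to `h` in the Ext-quiver, as a cardinal: the dimension of
the space of skew primitives modulo the trivial ones. -/
noncomputable def ntRank (g h : H) : Cardinal :=
  Module.rank K
    (↥(skewPrim K H g h) ⧸
      Submodule.comap (skewPrim K H g h).subtype (Submodule.span K {g - h}))

/-- Two grouplikes are linked in `D` if there is a nontrivial skew primitive (in either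
direction) between them lying in `D`. -/
def LinkedIn (D : Submodule K H) (g h : H) : Prop :=
  ∃ x ∈ D, (x ∈ skewPrim K H g h ∨ x ∈ skewPrim K H h g) ∧ x ∉ Submodule.span K {g - h}

/-- The Ext-quiver of the subcoalgebra `D` is connected. -/
def ConnectedOn (D : Submodule K H) : Prop :=
  ∀ g h : H, IsGrouplike K H g → g ∈ D → IsGrouplike K H h → h ∈ D →
    Relation.ReflTransGen (LinkedIn K H D) g h

/-- `B` is the link-indecomposable component containing `1` : a subcoalgebra containing `1`,
maximal with respect to its Ext-quiver being connected. -/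
structure IsLIC1 (B : Submodule K H) : Prop where
  subcoalg : IsSubcoalgebra K H B
  one_mem : (1 : H) ∈ B
  connected : ConnectedOn K H B
  maximal : ∀ B' : Submodule K H, IsSubcoalgebra K H B' → ConnectedOn K H B' →
    B ≤ B' → B' = B

end Pointed

/-- `a^i * a'^(-i)`, i.e. the `i`-th power (for `i : ℤ`) of `a` when `a'` is a two-sided
inverse of `a`. -/
def zp {B : Type} [Monoid B] (a a' : B) (i : ℤ) : B := a ^ i.toNat * a' ^ (-i).toNat

section Hopf

variable (K : Type) [CommRing K] (H : Type) [Ring H] [HopfAlgebra K H]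

/-- The antipode applied to an element; for a grouplike `g` this is its inverse `g⁻¹`. -/
noncomputable def inv' (g : H) : H := HopfAlgebra.antipode (R := K) g

/-- The Ext-quiver of the subcoalgebra `B` is the (possibly folded) grid quiver `Q^{m,n}` :
the grouplikes of `B` form the group `⟨a, b | ab = ba, aᵐ = bⁿ⟩`, and at each vertex `g`
there is exactly one arrow `g → g·a` and one arrow `g → g·b`, and no other arrows. -/
def GridQuiverOn (B : Submodule K H) (a b : H) (m n : ℤ) : Prop :=
  grouplikeIn K H B a ∧ grouplikeIn K H B b ∧ a * b = b * a ∧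
  a * inv' K H a = 1 ∧ inv' K H a * a = 1 ∧ b * inv' K H b = 1 ∧ inv' K H b * b = 1 ∧
  (∀ i j : ℤ, zp a (inv' K H a) i * zp b (inv' K H b) j = 1 ↔
      ∃ l : ℤ, i = l * m ∧ j = -(l * n)) ∧
  (∀ g : H, grouplikeIn K H B g ↔
      ∃ i j : ℤ, g = zp a (inv' K H a) i * zp b (inv' K H b) j) ∧
  (∀ g h : H, grouplikeIn K H B g → grouplikeIn K H B h →
      arrowsEq K H B g h (if h = g * a ∨ h = g * b then 1 else 0))

/-- The Ext-quiver of `B` is a single vertex, and `G(B) = {1}`. -/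
def SingleVertexQuiver (B : Submodule K H) : Prop :=
  (∀ g : H, grouplikeIn K H B g ↔ g = 1) ∧ arrowsEq K H B 1 1 0

/-- The Ext-quiver of `B` is a complete oriented cycle, and `G(B) = ⟨a | aⁿ = 1⟩`. -/
def CycleQuiver (B : Submodule K H) : Prop :=
  ∃ (a : H) (nn : ℕ), 0 < nn ∧ grouplikeIn K H B a ∧ a ^ nn = 1 ∧
    (∀ kk : ℕ, 0 < kk → kk < nn → a ^ kk ≠ 1) ∧
    (∀ g : H, grouplikeIn K H B g ↔ ∃ i : ℕ, g = a ^ i) ∧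
    (∀ g h : H, grouplikeIn K H B g → grouplikeIn K H B h →
      arrowsEq K H B g h (if h = g * a then 1 else 0))

/-- The Ext-quiver of `B` is the doubly infinite linear quiver `··· → · → · → ···`, and
`G(B) = ⟨a⟩` is infinite cyclic. -/
def LineQuiver (B : Submodule K H) : Prop :=
  ∃ a : H, grouplikeIn K H B a ∧ (∀ kk : ℕ, 0 < kk → a ^ kk ≠ 1) ∧
    (∀ g : H, grouplikeIn K H B g ↔ ∃ i j : ℕ, a ^ i * g = a ^ j) ∧
    (∀ g h : H, grouplikeIn K H B g → grouplikeIn K H B h →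
      arrowsEq K H B g h (if h = g * a then 1 else 0))

end Hopf

set_option linter.unusedSectionVars false

section Aux

variable {K : Type} [Field K] {H : Type} [AddCommGroup H] [Module K H] [Coalgebra K H]

noncomputable def matRho {ι : Type} [Fintype ι] [DecidableEq ι] (c : ι → ι → H) :
    (ι → K) →ₗ[K] (ι → K) ⊗[K] H :=
  Fintype.linearCombination K (fun j => ∑ i, (Pi.single i (1 : K) : ι → K) ⊗ₜ[K] c i j)

lemma matRho_single {ι : Type} [Fintype ι] [DecidableEq ι] (c : ι → ι → H) (j : ι) :
    matRho (K := K) c (Pi.single j 1) = ∑ i, (Pi.single i (1 : K) : ι → K) ⊗ₜ[K] c i j := by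
  rw [matRho, Fintype.linearCombination_apply_single, one_smul]

lemma matRho_apply {ι : Type} [Fintype ι] [DecidableEq ι] (c : ι → ι → H) (m : ι → K) :
    matRho (K := K) c m = ∑ j, m j • ∑ i, (Pi.single i (1 : K) : ι → K) ⊗ₜ[K] c i j := by
  rw [matRho, Fintype.linearCombination_apply]

noncomputable def matComod {ι : Type} [Fintype ι] [DecidableEq ι] (c : ι → ι → H)
    (hε : ∀ i j, Coalgebra.counit (R := K) (c i j) = if i = j then 1 else 0)
    (hΔ : ∀ i j, Coalgebra.comul (R := K) (c i j) = ∑ l, c i l ⊗ₜ[K] c l j) : Comod K H where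
  carrier := ι → K
  ρ := matRho c
  counit_comp := by
    intro m
    have : (TensorProduct.rid K (ι → K)).toLinearMap ∘ₗ
      (LinearMap.lTensor (ι → K) (Coalgebra.counit (R := K) (A := H))) ∘ₗ (matRho c)
        = LinearMap.id := by
      apply LinearMap.pi_ext'
      intro j
      ext : 1
      simp [matRho_single, hε]
    exact LinearMap.congr_fun this m
  coassoc := by
    intro m
    have : (LinearMap.lTensor (ι → K) (Coalgebra.comul (R := K) (A := H))) ∘ₗ (matRho c)
      = (TensorProduct.assoc K (ι → K) H H).toLinearMap ∘ₗ (LinearMap.rTensor H (matRho c)) ∘ₗ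
        (matRho c) := by
      apply LinearMap.pi_ext'
      intro j
      ext : 1
      simp [matRho_single, hΔ, TensorProduct.tmul_sum, TensorProduct.sum_tmul]
      rw [Finset.sum_comm]
    exact LinearMap.congr_fun this m

/-- coordinate extraction -/
noncomputable def coordT {ι : Type} (l : ι) : (ι → K) ⊗[K] H →ₗ[K] H :=
  (TensorProduct.lid K H).toLinearMap ∘ₗ LinearMap.rTensor H (LinearMap.proj l)

lemma coordT_tmul {ι : Type} (l : ι) (m : ι → K) (x : H) :
    coordT l (m ⊗ₜ[K] x) = m l • x := by
  simp [coordT]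

lemma matComod_hom {ι : Type} [Fintype ι] [DecidableEq ι] (c c' : ι → ι → H)
    (f : (ι → K) →ₗ[K] (ι → K))
    (hf : ∀ m, matRho c' (f m) = LinearMap.rTensor H f (matRho c m)) (l j : ι) :
    ∑ i, f (Pi.single j 1) i • c' l i = ∑ i, f (Pi.single i 1) l • c i j := by
  have := congrArg (coordT l) (hf (Pi.single j 1))
  rw [matRho_single, matRho_apply] at this
  simpa [coordT_tmul, Pi.single_apply] using this

lemma sum_single_decomp {ι : Type} [Fintype ι] [DecidableEq ι] (m : ι → K) :
    m = ∑ j, m j • (Pi.single j (1 : K) : ι → K) := by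
  ext i
  simp [Pi.single_apply]

lemma hasDim_aux {ι : Type} [Fintype ι] [DecidableEq ι] (c : ι → ι → H)
    (hε : ∀ i j, Coalgebra.counit (R := K) (c i j) = if i = j then 1 else 0)
    (hΔ : ∀ i j, Coalgebra.comul (R := K) (c i j) = ∑ l, c i l ⊗ₜ[K] c l j)
    (k : ℕ) (e : ι ≃ Fin k) (γ : ι → H) (hγ : ∀ i, IsGrouplike K H (γ i))
    (hd : ∀ i, c i i = γ i) (ht : ∀ i j, e j < e i → c i j = 0) :
    HasDimVector K H (matComod c hε hΔ)
      (fun h => Nat.card {i : Fin k // γ (e.symm i) = h}) := by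
  let F : Fin (k+1) → Submodule K (ι → K) := fun i =>
    { carrier := {m | ∀ l, (i : ℕ) ≤ (e l : ℕ) → m l = 0}
      add_mem' := by
        intro a b ha hb l hl
        simp [ha l hl, hb l hl]
      zero_mem' := by intro l hl; rfl
      smul_mem' := by
        intro r a ha l hl
        simp [ha l hl] }
  have hF : ∀ i m, m ∈ F i ↔ ∀ l, (i : ℕ) ≤ (e l : ℕ) → m l = 0 := fun i m => Iff.rfl
  have hs : ∀ (i : Fin (k+1)) l, (e l : ℕ) < (i : ℕ) → (Pi.single l (1 : K) : ι → K) ∈ F i := by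
    intro i l hl l' hl'
    rw [Pi.single_apply, if_neg]
    rintro rfl
    omega
  have hr : ∀ (i : Fin (k+1)) l (x : H), (e l : ℕ) < (i : ℕ) → (Pi.single l (1 : K) : ι → K) ⊗ₜ[K] x ∈
      LinearMap.range (LinearMap.rTensor H (F i).subtype) := by
    intro i l x hl
    exact ⟨(⟨_, hs i l hl⟩ : F i) ⊗ₜ[K] x, by simp⟩
  have hρ : ∀ (i : Fin (k+1)) j, (e j : ℕ) < (i : ℕ) → matRho c (Pi.single j (1 : K) : ι → K) ∈
      LinearMap.range (LinearMap.rTensor H (F i).subtype) := by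
    intro i j hj
    rw [matRho_single]
    refine Submodule.sum_mem _ fun l _ => ?_
    by_cases h : e j < e l
    · rw [ht _ _ h]; simp
    · apply hr
      have : (e l : ℕ) ≤ e j := by simpa using h
      omega
  have c1 : F 0 = ⊥ := by
    rw [eq_bot_iff]
    intro m hm
    have : m = 0 := by
      ext l
      exact hm l (by simp)
    simp [this]
  have c2 : F (Fin.last k) = ⊤ := by
    rw [eq_top_iff]
    intro m _ l hl
    have := (e l).2
    simp at hl
    omega
  have c3 : ∀ i : Fin k, F i.castSucc ≤ F i.succ := by
    intro i m hm l hl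
    apply hm l
    rw [Fin.val_succ] at hl
    rw [Fin.val_castSucc]
    omega
  have c4 : ∀ i, ∀ m ∈ F i, matRho c m ∈ LinearMap.range (LinearMap.rTensor H (F i).subtype) := by
    intro i m hm
    rw [sum_single_decomp (K := K) m, map_sum]
    refine Submodule.sum_mem _ fun j _ => ?_
    rw [map_smul]
    by_cases h : (i : ℕ) ≤ (e j : ℕ)
    · rw [hm j h, zero_smul]; exact zero_mem _
    · exact Submodule.smul_mem _ _ (hρ i j (by omega))
  have c6 : ∀ i : Fin k, ∃ m : ι → K, m ∈ F i.succ ∧ m ∉ F i.castSucc ∧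
      F i.succ = F i.castSucc ⊔ Submodule.span K {m} := by
    intro i
    refine ⟨(Pi.single (e.symm i) (1 : K) : ι → K), ?_, ?_, ?_⟩
    · apply hs; simp
    · intro h
      have := h (e.symm i) (by simp)
      simp at this
    · apply le_antisymm
      · intro m hm
        rw [sum_single_decomp (K := K) m]
        refine Submodule.sum_mem _ fun j _ => ?_
        rcases lt_trichotomy (e j) i with h | h | h
        · exact Submodule.mem_sup_left (Submodule.smul_mem _ _
            (hs _ _ (by rw [Fin.val_castSucc]; exact h)))
        · refine Submodule.mem_sup_right (Submodule.smul_mem _ _ ?_)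
          rw [← h, e.symm_apply_apply]
          exact Submodule.mem_span_singleton_self _
        · rw [hm j (by rw [Fin.val_succ]; exact h), zero_smul]; exact zero_mem _
      · refine sup_le (c3 i) ?_
        rw [Submodule.span_singleton_le_iff_mem]
        apply hs; simp
  have c7 : ∀ i : Fin k, ∀ m ∈ F i.succ, matRho c m - m ⊗ₜ[K] γ (e.symm i) ∈
      LinearMap.range (LinearMap.rTensor H (F i.castSucc).subtype) := by
    intro i m hm
    have : matRho c m - m ⊗ₜ[K] γ (e.symm i) = ∑ j, m j • (matRho c (Pi.single j (1 : K))
        - (Pi.single j (1 : K) : ι → K) ⊗ₜ[K] γ (e.symm i)) := by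
      conv_lhs => rw [sum_single_decomp (K := K) m]
      rw [map_sum, TensorProduct.sum_tmul, ← Finset.sum_sub_distrib]
      refine Finset.sum_congr rfl fun j _ => ?_
      rw [map_smul, smul_sub, TensorProduct.smul_tmul']
    rw [this]
    refine Submodule.sum_mem _ fun j _ => ?_
    rcases lt_trichotomy (e j) i with h | h | h
    · have h' : (e j : ℕ) < (i.castSucc : ℕ) := by rw [Fin.val_castSucc]; exact h
      exact Submodule.smul_mem _ _ (Submodule.sub_mem _ (hρ _ _ h') (hr _ _ _ h'))
    · refine Submodule.smul_mem _ _ ?_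
      rw [← h, e.symm_apply_apply, matRho_single, ← Finset.add_sum_erase _ _ (Finset.mem_univ j),
        hd, add_sub_cancel_left]
      refine Submodule.sum_mem _ fun l hl => ?_
      by_cases h' : e j < e l
      · rw [ht _ _ h']; simp
      · apply hr
        have h1 : (e l : ℕ) ≤ e j := by simpa using h'
        have h2 : (e l : ℕ) ≠ e j := fun hh => (Finset.ne_of_mem_erase hl) (e.injective (Fin.ext hh))
        rw [Fin.val_castSucc]
        omega
    · rw [hm j (by rw [Fin.val_succ]; exact h), zero_smul]; exact zero_mem _
  exact ⟨k, F, fun i => γ (e.symm i), c1, c2, c3, c4, fun i => hγ _, c6, c7, fun h => rfl⟩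

lemma counit_skew {g h x : H} (hg : IsGrouplike K H g) (hh : IsGrouplike K H h)
    (hx : x ∈ skewPrim K H g h) : Coalgebra.counit (R := K) x = 0 := by
  rw [mem_skewPrim] at hx
  have h1 := Coalgebra.rTensor_counit_comul (R := K) x
  rw [hx, map_add, LinearMap.rTensor_tmul, LinearMap.rTensor_tmul, hg.1] at h1
  have h2 := congrArg (TensorProduct.lid K H) h1
  simp at h2
  rcases h2 with h2 | h2
  · exact h2
  · have := hh.1
    rw [h2] at this
    simp at this

def blk {p q : ℕ} (h : Fin p → H) (g : Fin q → H) (x : Fin p → Fin q → H) :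
    Fin p ⊕ Fin q → Fin p ⊕ Fin q → H
  | .inl i, .inl i' => if i = i' then h i else 0
  | .inr j, .inr j' => if j = j' then g j else 0
  | .inl i, .inr j => x i j
  | .inr _, .inl _ => 0

noncomputable def blkComod {p q : ℕ} (h : Fin p → H) (g : Fin q → H) (x : Fin p → Fin q → H)
    (hh : ∀ i, IsGrouplike K H (h i)) (hg : ∀ i, IsGrouplike K H (g i))
    (hx : ∀ i j, x i j ∈ skewPrim K H (h i) (g j)) : Comod K H :=
  matComod (K := K) (blk h g x)
    (by
      rintro (i | i) (j | j)
      · simp only [blk, Sum.inl.injEq]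
        split_ifs with hij
        · exact (hh i).1
        · simp
      · simpa [blk] using counit_skew (hh i) (hg j) (hx i j)
      · simp [blk]
      · simp only [blk, Sum.inr.injEq]
        split_ifs with hij
        · exact (hg i).1
        · simp)
    (by
      rintro (i | i) (j | j)
      · simp only [blk, Fintype.sum_sum_type]
        by_cases hij : i = j
        · subst hij
          rw [if_pos rfl, (hh i).2, Finset.sum_eq_single i]
          · simp
          · intro b _ hb; simp [hb]
          · simp
        · rw [if_neg hij, map_zero, Finset.sum_eq_single i]
          · simp [hij]
          · intro b _ hb; simp [Ne.symm hb]
          · simp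
      · simp only [blk, Fintype.sum_sum_type]
        rw [(mem_skewPrim K H).1 (hx i j), Finset.sum_eq_single i, Finset.sum_eq_single j]
        · simp
        · intro b _ hb; simp [hb]
        · simp
        · intro b _ hb; simp [Ne.symm hb]
        · simp
      · simp [blk]
      · simp only [blk, Fintype.sum_sum_type]
        by_cases hij : i = j
        · subst hij
          rw [if_pos rfl, (hg i).2, add_comm, Finset.sum_eq_single i]
          · simp
          · intro b _ hb; simp [hb]
          · simp
        · rw [if_neg hij, map_zero, add_comm, Finset.sum_eq_single i]
          · simp [hij]
          · intro b _ hb; simp [Ne.symm hb]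
          · simp)

structure BlkEqs {p q : ℕ} (h : Fin p → H) (g : Fin q → H) (x x' : Fin p → Fin q → H)
    (P : Fin p → Fin p → K) (R : Fin q → Fin p → K) (C : Fin p → Fin q → K)
    (D : Fin q → Fin q → K) : Prop where
  ww : ∀ i j, P i j • h i + ∑ k, R k j • x' i k = P i j • h j
  vw : ∀ k j, R k j • g k = R k j • h j
  wv : ∀ i j, C i j • h i + ∑ k, D k j • x' i k = ∑ l, P i l • x l j + C i j • g j
  vv : ∀ i j, D i j • g i = ∑ l, R i l • x l j + D i j • g j

lemma blkEqs_of {p q : ℕ} (h : Fin p → H) (g : Fin q → H) (x x' : Fin p → Fin q → H)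
    (f : (Fin p ⊕ Fin q → K) →ₗ[K] (Fin p ⊕ Fin q → K))
    (hf : ∀ m, matRho (blk h g x') (f m) = LinearMap.rTensor H f (matRho (blk h g x) m)) :
    BlkEqs h g x x' (fun i j => f (Pi.single (.inl j) 1) (.inl i))
      (fun i j => f (Pi.single (.inl j) 1) (.inr i))
      (fun i j => f (Pi.single (.inr j) 1) (.inl i))
      (fun i j => f (Pi.single (.inr j) 1) (.inr i)) := by
  have key := matComod_hom _ _ f hf
  constructor
  · intro i j; simpa [blk] using key (.inl i) (.inl j)
  · intro i j; simpa [blk] using key (.inr i) (.inl j)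
  · intro i j; simpa [blk] using key (.inl i) (.inr j)
  · intro i j; simpa [blk] using key (.inr i) (.inr j)

lemma comodIso_comp {M N R : Comod K H} (h1 : ComodIso K H M R) (h2 : ComodIso K H N R) :
    ∃ f : ComodHom K H M N, Function.Injective f.toLin := by
  obtain ⟨f1, hf1⟩ := h1
  obtain ⟨f2, hf2⟩ := h2
  let e := LinearEquiv.ofBijective f2.toLin hf2
  have he : ∀ m, f2.toLin (e.symm m) = m := fun m => e.apply_symm_apply m
  have he' : e.symm.toLinearMap ∘ₗ f2.toLin = LinearMap.id := by
    ext m; exact e.symm_apply_apply m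
  refine ⟨⟨e.symm.toLinearMap ∘ₗ f1.toLin, ?_⟩, ?_⟩
  · intro m
    have h1 := f1.compat m
    have h2 := f2.compat (e.symm (f1.toLin m))
    rw [he, h1] at h2
    have h3 := congrArg (LinearMap.rTensor H e.symm.toLinearMap) h2
    rw [← LinearMap.rTensor_comp_apply, ← LinearMap.rTensor_comp_apply, he',
      LinearMap.rTensor_id] at h3
    exact h3.symm
  · exact e.symm.injective.comp hf1.injective

theorem no_family [Infinite K] (hdisc : DiscreteCorepType K H) {p q : ℕ} (hp : 0 < p)
    (h : Fin p → H) (g : Fin q → H)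
    (hh : ∀ i, IsGrouplike K H (h i)) (hg : ∀ i, IsGrouplike K H (g i))
    (x : K → Fin p → Fin q → H)
    (hx : ∀ t i j, x t i j ∈ skewPrim K H (h i) (g j))
    (hrig : ∀ t s P R C D, BlkEqs (K := K) h g (x t) (x s) P R C D →
      ∃ α : K, (∀ i j, R i j = 0) ∧ (∀ i j, P i j = if i = j then α else 0) ∧
        (∀ i j, D i j = if i = j then α else 0) ∧ (t = s ∨ α = 0)) : False := by
  let M : K → Comod K H := fun t => blkComod h g (x t) hh hg (hx t)
  have hdim : ∀ t, HasDimVector K H (M t) (fun z => Nat.card {i : Fin (p + q) //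
      Sum.elim h g (finSumFinEquiv.symm i) = z}) := by
    intro t
    refine hasDim_aux _ _ _ (p + q) finSumFinEquiv (Sum.elim h g) ?_ ?_ ?_
    · rintro (i | i)
      · exact hh i
      · exact hg i
    · rintro (i | i) <;> simp [blk]
    · rintro (i | i) (j | j) hij
      · have : i ≠ j := by rintro rfl; simp at hij
        simp [blk, this]
      · exfalso
        rw [Fin.lt_def] at hij
        simp at hij
        omega
      · rfl
      · have : i ≠ j := by rintro rfl; simp at hij
        simp [blk, this]
  have hne : ∀ (j : Fin p), (Pi.single (Sum.inl j) (1 : K) : Fin p ⊕ Fin q → K) ≠ 0 := by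
    intro j hj
    have := congrFun hj (.inl j)
    simp at this
  have hfe : ∀ (t s : K) (f : (Fin p ⊕ Fin q → K) →ₗ[K] (Fin p ⊕ Fin q → K)),
    (∀ m, matRho (blk h g (x s)) (f m) = LinearMap.rTensor H f (matRho (blk h g (x t)) m)) →
      ∃ α : K, (∀ j, f (Pi.single (.inl j) 1) = α • Pi.single (.inl j) 1) ∧
        (∀ j i, f (Pi.single (.inr j) 1) (.inr i) = if i = j then α else 0) ∧
        (t = s ∨ α = 0) := by
    intro t s f hf
    obtain ⟨α, h1, h2, h3, h4⟩ := hrig t s _ _ _ _ (blkEqs_of h g (x t) (x s) f hf)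
    refine ⟨α, ?_, fun j i => h3 i j, h4⟩
    intro j
    ext (i | i)
    · rw [h2 i j]; simp [Pi.single_apply]
    · rw [h1 i j]; simp
  have hind : ∀ t, (M t).Indec K H := by
    intro t
    refine ⟨⟨(Pi.single (Sum.inl ⟨0, hp⟩) (1 : K) : Fin p ⊕ Fin q → K), hne _⟩, ?_⟩
    intro F hF
    obtain ⟨f, hf⟩ := F
    change (Fin p ⊕ Fin q → K) →ₗ[K] (Fin p ⊕ Fin q → K) at f
    change f ∘ₗ f = f at hF
    change f = 0 ∨ f = LinearMap.id
    obtain ⟨α, h1, h2, -⟩ := hfe t t f hf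
    have hnn : (f - α • LinearMap.id) ∘ₗ (f - α • LinearMap.id) = 0 := by
      have hW : ∀ m : Fin p ⊕ Fin q → K, (∀ j, m (.inr j) = 0) →
          (f - α • (LinearMap.id : (Fin p ⊕ Fin q → K) →ₗ[K] (Fin p ⊕ Fin q → K))) m = 0 := by
        intro m hm
        conv_lhs => rw [sum_single_decomp (K := K) m]
        rw [map_sum]
        refine Finset.sum_eq_zero ?_
        rintro (j | j) _
        · rw [map_smul, LinearMap.sub_apply, h1 j]; simp
        · rw [hm j]; simp
      apply LinearMap.pi_ext'
      intro j
      ext1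
      rw [LinearMap.comp_apply, LinearMap.comp_apply, LinearMap.zero_comp, LinearMap.zero_apply]
      apply hW
      intro i
      rcases j with j | j
      · simp [h1 j]
      · simp [h2 j i, Pi.single_apply]
    have h3 : f = (2 * α) • f - (α * α) • LinearMap.id := by
      have : f ∘ₗ f - (2 * α) • f + (α * α) • LinearMap.id = 0 := by
        rw [← hnn]
        simp only [LinearMap.sub_comp, LinearMap.comp_sub, LinearMap.smul_comp,
          LinearMap.comp_smul, LinearMap.id_comp, LinearMap.comp_id]
        module
      rw [hF] at this
      rw [← sub_eq_zero, ← this]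
      module
    have h4 : α = 0 ∨ α = 1 := by
      have := LinearMap.congr_fun hF (Pi.single (Sum.inl ⟨0, hp⟩) (1 : K))
      rw [LinearMap.comp_apply, h1, map_smul, h1] at this
      have := congrFun this (.inl ⟨0, hp⟩)
      simp at this
      have h5 : α * (α - 1) = 0 := by linear_combination this
      rcases mul_eq_zero.1 h5 with h6 | h6
      · exact Or.inl h6
      · exact Or.inr (sub_eq_zero.1 h6)
    rcases h4 with rfl | rfl
    · left
      simpa using h3
    · right
      have : f - LinearMap.id = 0 := by
        have : (2 * (1:K)) • f - ((1:K) * 1) • LinearMap.id - f = 0 := by rw [← h3, sub_self]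
        rw [← this]; module
      exact sub_eq_zero.1 this
  obtain ⟨N, Rr, hR⟩ := hdisc _
  choose r hr using fun t => hR (M t) (hind t) (hdim t)
  obtain ⟨t, s, hts, hrts⟩ := Finite.exists_ne_map_eq_of_infinite r
  have hs := hr s
  rw [← hrts] at hs
  obtain ⟨⟨f, hf⟩, hinj⟩ := comodIso_comp (hr t) hs
  obtain ⟨α, h1, -, h3⟩ := hfe t s f hf
  have h4 : α = 0 := h3.resolve_left hts
  have h5 := h1 ⟨0, hp⟩
  rw [h4, zero_smul] at h5
  exact hne ⟨0, hp⟩ (hinj (h5.trans (map_zero f).symm))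

end Aux
section Families

variable {K : Type} [Field K] {H : Type} [AddCommGroup H] [Module K H] [Coalgebra K H]

lemma smul_ne_zero_aux {r : K} {g h : H} (hgh : g ≠ h) (hr : r • g = r • h) : r = 0 := by
  by_contra h0
  exact hgh (smul_right_injective H h0 hr)

lemma nontriv_aux {x g h : H} (hx : x ∉ Submodule.span K {g - h}) {r s : K}
    (hrs : r • x = s • (g - h)) : r = 0 := by
  by_contra h0
  apply hx
  rw [Submodule.mem_span_singleton]
  refine ⟨r⁻¹ * s, ?_⟩
  rw [mul_smul, ← hrs, smul_smul, inv_mul_cancel₀ h0, one_smul]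

theorem no_kronecker [Infinite K] (hdisc : DiscreteCorepType K H) {h g X Y : H}
    (hh : IsGrouplike K H h) (hg : IsGrouplike K H g)
    (hX : X ∈ skewPrim K H h g) (hY : Y ∈ skewPrim K H h g)
    (hXY : ∀ r s : K, r • X + s • Y ∈ Submodule.span K {h - g} → r = 0 ∧ s = 0) : False := by
  refine no_family hdisc (p := 1) (q := 1) one_pos (fun _ => h) (fun _ => g) (fun _ => hh)
    (fun _ => hg) (fun t _ _ => X + t • Y)
    (fun t _ _ => Submodule.add_mem _ hX (Submodule.smul_mem _ _ hY)) ?_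
  intro t s P R C D E
  have e1 := E.ww 0 0
  have e2 := E.wv 0 0
  simp only [Finset.univ_unique, Finset.sum_singleton, Fin.default_eq_zero] at e1 e2
  have hR : R 0 0 = 0 := by
    refine (hXY (R 0 0) (R 0 0 * s) ?_).1
    have : R 0 0 • X + (R 0 0 * s) • Y = 0 := by
      rw [add_eq_left] at e1
      rw [← e1]; module
    rw [this]; exact zero_mem _
  obtain ⟨h1, h2⟩ := hXY (D 0 0 - P 0 0) (D 0 0 * s - P 0 0 * t) (by
    rw [Submodule.mem_span_singleton]
    refine ⟨- C 0 0, ?_⟩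
    have : (D 0 0 - P 0 0) • X + (D 0 0 * s - P 0 0 * t) • Y =
      D 0 0 • (X + s • Y) - P 0 0 • (X + t • Y) := by module
    rw [this, eq_sub_iff_add_eq.2 ((add_comm _ _).trans e2)]
    module)
  have h3 : D 0 0 = P 0 0 := sub_eq_zero.1 h1
  refine ⟨P 0 0, ?_, ?_, ?_, ?_⟩
  · intro i j; rw [Subsingleton.elim i 0, Subsingleton.elim j 0, hR]
  · intro i j; rw [Subsingleton.elim i 0, Subsingleton.elim j 0, if_pos rfl]
  · intro i j; rw [Subsingleton.elim i 0, Subsingleton.elim j 0, if_pos rfl, h3]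
  · rw [h3] at h2
    have : P 0 0 * (t - s) = 0 := by linear_combination -h2
    rcases mul_eq_zero.1 this with h | h
    · exact Or.inr h
    · exact Or.inl (sub_eq_zero.1 h)

theorem no_cycle [Infinite K] (hdisc : DiscreteCorepType K H) {n : ℕ} (h g X Y : Fin (n + 2) → H)
    (hh : ∀ i, IsGrouplike K H (h i)) (hg : ∀ i, IsGrouplike K H (g i))
    (hhi : Function.Injective h) (hgi : Function.Injective g)
    (hX : ∀ j, X j ∈ skewPrim K H (h j) (g j)) (hY : ∀ j, Y j ∈ skewPrim K H (h (j + 1)) (g j))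
    (hX' : ∀ j, X j ∉ Submodule.span K {h j - g j})
    (hY' : ∀ j, Y j ∉ Submodule.span K {h (j + 1) - g j}) : False := by
  have hj1 : ∀ j : Fin (n + 2), j + 1 ≠ j := by
    intro j hj
    simp at hj
  refine no_family hdisc (p := n + 2) (q := n + 2) (by omega) h g hh hg
    (fun t i j => if i = j then X j else if i = j + 1 then (if j + 1 = 0 then t else 1) • Y j
      else 0) ?_ ?_
  · intro t i j
    split_ifs with h1 h2 h3
    · rw [h1]; exact hX j
    · rw [h2]; exact Submodule.smul_mem _ _ (hY j)
    · rw [h2]; exact Submodule.smul_mem _ _ (hY j)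
    · exact zero_mem _
  intro t s P R C D E
  have hR : ∀ k j, R k j = 0 := by
    intro k j
    by_contra hne
    have hgk : g k = h j := by
      by_contra h0
      exact hne (smul_ne_zero_aux h0 (E.vw k j))
    have e1 := E.ww k j
    rw [Finset.sum_eq_single k] at e1
    · rw [if_pos rfl] at e1
      refine hne (nontriv_aux (hX' k) (s := - P k j) ?_)
      rw [hgk, ← sub_eq_zero] at *
      rw [← e1]; module
    · intro l _ hl
      have : g l ≠ h j := fun h0 => hl (hgi (h0.trans hgk.symm))
      rw [smul_ne_zero_aux this (E.vw l j), zero_smul]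
    · simp
  have hP : ∀ i j, i ≠ j → P i j = 0 := by
    intro i j hij
    have e1 := E.ww i j
    simp only [hR, zero_smul, Finset.sum_const_zero, add_zero] at e1
    exact smul_ne_zero_aux (hhi.ne hij) e1
  have hD : ∀ i j, i ≠ j → D i j = 0 := by
    intro i j hij
    have e1 := E.vv i j
    simp only [hR, zero_smul, Finset.sum_const_zero, zero_add] at e1
    exact smul_ne_zero_aux (hgi.ne hij) e1
  have e2 : ∀ i j, C i j • h i + D j j • (if i = j then X j else if i = j + 1 then
      (if j + 1 = 0 then s else 1) • Y j else 0) = P i i • (if i = j then X j else if i = j + 1 then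
      (if j + 1 = 0 then t else 1) • Y j else 0) + C i j • g j := by
    intro i j
    have e1 := E.wv i j
    rw [Finset.sum_eq_single j, Finset.sum_eq_single i] at e1
    · exact e1
    · intro b _ hb; rw [hP _ _ hb.symm, zero_smul]
    · simp
    · intro b _ hb; rw [hD _ _ hb, zero_smul]
    · simp
  have hDP : ∀ j, D j j = P j j := by
    intro j
    have e1 := e2 j j
    rw [if_pos rfl, if_pos rfl, ← sub_eq_zero] at e1
    refine sub_eq_zero.1 (nontriv_aux (hX' j) (s := - C j j) ?_)
    rw [← sub_eq_zero, ← e1]; module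
  have hDP' : ∀ j, P j j * (if j + 1 = 0 then s else 1) =
      P (j + 1) (j + 1) * (if j + 1 = 0 then t else 1) := by
    intro j
    have e1 := e2 (j + 1) j
    rw [if_neg (hj1 j), if_neg (hj1 j), if_pos rfl, if_pos rfl, ← sub_eq_zero, hDP] at e1
    refine sub_eq_zero.1 (nontriv_aux (hY' j) (s := - C (j + 1) j) ?_)
    rw [← sub_eq_zero, ← e1]; module
  have hPc : ∀ j, P j j = P 0 0 := by
    intro j
    induction j using Fin.induction with
    | zero => rfl
    | succ i ih =>
      have h1 := hDP' i.castSucc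
      rw [Fin.coeSucc_eq_succ, if_neg (Fin.succ_ne_zero i), if_neg (Fin.succ_ne_zero i), mul_one,
        mul_one] at h1
      rw [← h1, ih]
  refine ⟨P 0 0, hR, ?_, ?_, ?_⟩
  · intro i j
    split_ifs with hij
    · rw [hij, hPc]
    · exact hP _ _ hij
  · intro i j
    split_ifs with hij
    · rw [hij, hDP, hPc]
    · exact hD _ _ hij
  · have h1 := hDP' (Fin.last (n + 1))
    rw [hPc, hPc (_ + 1), Fin.last_add_one, if_pos rfl, if_pos rfl] at h1
    have : P 0 0 * (t - s) = 0 := by linear_combination -h1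
    rcases mul_eq_zero.1 this with h | h
    · exact Or.inr h
    · exact Or.inl (sub_eq_zero.1 h)

theorem no_dtilde [Infinite K] (hdisc : DiscreteCorepType K H) {u h3 h4 a b c ya yb yc z1 z2 : H}
    (hu : IsGrouplike K H u) (hh3 : IsGrouplike K H h3) (hh4 : IsGrouplike K H h4)
    (ha : IsGrouplike K H a) (hb : IsGrouplike K H b) (hc : IsGrouplike K H c)
    (hu3 : u ≠ h3) (hu4 : u ≠ h4) (h34 : h3 ≠ h4) (hab : a ≠ b) (hac : a ≠ c) (hbc : b ≠ c)
    (hya : ya ∈ skewPrim K H u a) (hyb : yb ∈ skewPrim K H u b) (hyc : yc ∈ skewPrim K H u c)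
    (hz1 : z1 ∈ skewPrim K H h3 a) (hz2 : z2 ∈ skewPrim K H h4 a)
    (hya' : ya ∉ Submodule.span K {u - a}) (hyb' : yb ∉ Submodule.span K {u - b})
    (hyc' : yc ∉ Submodule.span K {u - c})
    (hz1' : z1 ∉ Submodule.span K {h3 - a}) (hz2' : z2 ∉ Submodule.span K {h4 - a}) : False := by
  refine no_family hdisc (p := 4) (q := 4) (by omega) ![u, u, h3, h4] ![a, a, b, c] ?_ ?_
    (fun t => ![![ya, 0, yb, 0], ![0, ya, 0, yc], ![z1, -z1, 0, 0], ![t • z2, -z2, 0, 0]]) ?_ ?_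
  · intro i; fin_cases i <;> assumption
  · intro i; fin_cases i <;> assumption
  · intro t i j
    fin_cases i <;> fin_cases j <;> first | assumption | exact zero_mem _ |
      exact Submodule.neg_mem _ (by assumption) | exact Submodule.smul_mem _ _ (by assumption)
  intro t s P R C D E
  obtain ⟨ww, vw, wv, vv⟩ := E
  have hR : ∀ k j, R k j = 0 := by
    have hRj : ∀ j, R 0 j = 0 ∧ R 1 j = 0 ∧ R 2 j = 0 ∧ R 3 j = 0 := by
      intro j
      have v0 := vw 0 j
      have v1 := vw 1 j
      have v2 := vw 2 j
      have v3 := vw 3 j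
      have w0 := ww 0 j
      have w1 := ww 1 j
      simp [Fin.sum_univ_four] at w0 w1
      simp only [Matrix.cons_val] at v0 v1 v2 v3
      generalize (![u, u, h3, h4] : Fin 4 → H) j = hj at *
      by_cases hja : a = hj
      · subst hja
        have r2 := smul_ne_zero_aux hab.symm v2
        have r3 := smul_ne_zero_aux hac.symm v3
        rw [r2, zero_smul, add_zero] at w0
        rw [r3, zero_smul, add_zero] at w1
        refine ⟨nontriv_aux hya' (s := - P 0 j) ?_, nontriv_aux hya' (s := - P 1 j) ?_, r2, r3⟩
        · rw [← sub_eq_zero] at w0 ⊢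
          rw [← w0]; module
        · rw [← sub_eq_zero] at w1 ⊢
          rw [← w1]; module
      · have r0 := smul_ne_zero_aux hja v0
        have r1 := smul_ne_zero_aux hja v1
        rw [r0, zero_smul, zero_add] at w0
        rw [r1, zero_smul, zero_add] at w1
        refine ⟨r0, r1, ?_, ?_⟩
        · by_cases hjb : b = hj
          · subst hjb
            refine nontriv_aux hyb' (s := - P 0 j) ?_
            rw [← sub_eq_zero] at w0 ⊢
            rw [← w0]; module
          · exact smul_ne_zero_aux hjb v2
        · by_cases hjc : c = hj
          · subst hjc
            refine nontriv_aux hyc' (s := - P 1 j) ?_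
            rw [← sub_eq_zero] at w1 ⊢
            rw [← w1]; module
          · exact smul_ne_zero_aux hjc v3
    intro k j
    obtain ⟨r0, r1, r2, r3⟩ := hRj j
    fin_cases k <;> assumption
  have hP : ∀ i j, (![u, u, h3, h4] : Fin 4 → H) i ≠ (![u, u, h3, h4] : Fin 4 → H) j →
      P i j = 0 := by
    intro i j hij
    have e1 := ww i j
    simp only [hR, zero_smul, Finset.sum_const_zero, add_zero] at e1
    exact smul_ne_zero_aux hij e1
  have hD : ∀ i j, (![a, a, b, c] : Fin 4 → H) i ≠ (![a, a, b, c] : Fin 4 → H) j →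
      D i j = 0 := by
    intro i j hij
    have e1 := vv i j
    simp only [hR, zero_smul, Finset.sum_const_zero, zero_add] at e1
    exact smul_ne_zero_aux hij e1
  have P02 := hP 0 2 hu3
  have P03 := hP 0 3 hu4
  have P12 := hP 1 2 hu3
  have P13 := hP 1 3 hu4
  have P20 := hP 2 0 hu3.symm
  have P21 := hP 2 1 hu3.symm
  have P23 := hP 2 3 h34
  have P30 := hP 3 0 hu4.symm
  have P31 := hP 3 1 hu4.symm
  have P32 := hP 3 2 h34.symm
  have D02 := hD 0 2 hab
  have D03 := hD 0 3 hac
  have D12 := hD 1 2 hab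
  have D13 := hD 1 3 hac
  have D20 := hD 2 0 hab.symm
  have D21 := hD 2 1 hab.symm
  have D23 := hD 2 3 hbc
  have D30 := hD 3 0 hac.symm
  have D31 := hD 3 1 hac.symm
  have D32 := hD 3 2 hbc.symm
  have w00 := wv 0 0
  have w01 := wv 0 1
  have w02 := wv 0 2
  have w03 := wv 0 3
  have w10 := wv 1 0
  have w11 := wv 1 1
  have w12 := wv 1 2
  have w13 := wv 1 3
  have w20 := wv 2 0
  have w21 := wv 2 1
  have w30 := wv 3 0
  have w31 := wv 3 1
  clear wv ww vv vw hP hD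
  simp [Fin.sum_univ_four, P02, P03, P12, P13, P20, P21, P23, P30, P31, P32,
    D02, D03, D12, D13, D20, D21, D23, D30, D31, D32]
    at w00 w01 w02 w03 w10 w11 w12 w13 w20 w21 w30 w31
  rw [← sub_eq_zero] at w00 w01 w02 w03 w10 w11 w12 w13 w20 w21 w30 w31
  have q00 : D 0 0 - P 0 0 = 0 := nontriv_aux hya' (s := - C 0 0)
    (by rw [← sub_eq_zero, ← w00]; module)
  have q01 : D 0 1 - P 0 1 = 0 := nontriv_aux hya' (s := - C 0 1)
    (by rw [← sub_eq_zero, ← w01]; module)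
  have q10 : D 1 0 - P 1 0 = 0 := nontriv_aux hya' (s := - C 1 0)
    (by rw [← sub_eq_zero, ← w10]; module)
  have q11 : D 1 1 - P 1 1 = 0 := nontriv_aux hya' (s := - C 1 1)
    (by rw [← sub_eq_zero, ← w11]; module)
  have q02 : D 2 2 - P 0 0 = 0 := nontriv_aux hyb' (s := - C 0 2)
    (by rw [← sub_eq_zero, ← w02]; module)
  have q12 : - P 1 0 = 0 := nontriv_aux hyb' (s := - C 1 2)
    (by rw [← sub_eq_zero, ← w12]; module)
  have q03 : - P 0 1 = 0 := nontriv_aux hyc' (s := - C 0 3)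
    (by rw [← sub_eq_zero, ← w03]; module)
  have q13 : D 3 3 - P 1 1 = 0 := nontriv_aux hyc' (s := - C 1 3)
    (by rw [← sub_eq_zero, ← w13]; module)
  have q20 : D 0 0 - D 1 0 - P 2 2 = 0 := nontriv_aux hz1' (s := - C 2 0)
    (by rw [← sub_eq_zero, ← w20]; module)
  have q21 : D 0 1 - D 1 1 + P 2 2 = 0 := nontriv_aux hz1' (s := - C 2 1)
    (by rw [← sub_eq_zero, ← w21]; module)
  have q30 : D 0 0 * s - D 1 0 - P 3 3 * t = 0 := nontriv_aux hz2' (s := - C 3 0)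
    (by rw [← sub_eq_zero, ← w30]; module)
  have q31 : D 0 1 * s - D 1 1 + P 3 3 = 0 := nontriv_aux hz2' (s := - C 3 1)
    (by rw [← sub_eq_zero, ← w31]; module)
  have P01 : P 0 1 = 0 := by linear_combination -q03
  have P10 : P 1 0 = 0 := by linear_combination -q12
  have D01 : D 0 1 = 0 := by linear_combination q01 + P01
  have D10 : D 1 0 = 0 := by linear_combination q10 + P10
  have D00 : D 0 0 = P 0 0 := by linear_combination q00
  have P22 : P 2 2 = P 0 0 := by linear_combination q00 - q20 - D10
  have D11 : D 1 1 = P 0 0 := by linear_combination P22 - q21 + D01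
  have P11 : P 1 1 = P 0 0 := by linear_combination D11 - q11
  have P33 : P 3 3 = P 0 0 := by linear_combination q31 + D11 - s * D01
  have D22 : D 2 2 = P 0 0 := by linear_combination q02
  have D33 : D 3 3 = P 0 0 := by linear_combination q13 + P11
  refine ⟨P 0 0, hR, ?_, ?_, ?_⟩
  · intro i j
    fin_cases i <;> fin_cases j <;> simp <;> assumption
  · intro i j
    fin_cases i <;> fin_cases j <;> simp <;> assumption
  · have : P 0 0 * (t - s) = 0 := by
      linear_combination -q30 + s * D00 - D10 - t * P33
    rcases mul_eq_zero.1 this with h | h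
    · exact Or.inr h
    · exact Or.inl (sub_eq_zero.1 h)

end Families
section HopfAux

variable {K : Type} [Field K] {H : Type} [Ring H] [HopfAlgebra K H]

lemma isGrouplike_iff' {g : H} : IsGrouplike K H g ↔ IsGroupLikeElem K g :=
  ⟨fun h => ⟨h.1, h.2⟩, fun h => ⟨h.1, h.2⟩⟩

lemma gl (c : GroupLike K H) : IsGrouplike K H c.val := isGrouplike_iff'.2 c.2

lemma skew_mul_left {u g h x : H} (hu : IsGrouplike K H u) (hx : x ∈ skewPrim K H g h) :
    u * x ∈ skewPrim K H (u * g) (u * h) := by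
  rw [mem_skewPrim] at *
  rw [Bialgebra.comul_mul, hu.2, hx, mul_add, Algebra.TensorProduct.tmul_mul_tmul,
    Algebra.TensorProduct.tmul_mul_tmul]

lemma skew_mul_right {u g h x : H} (hu : IsGrouplike K H u) (hx : x ∈ skewPrim K H g h) :
    x * u ∈ skewPrim K H (g * u) (h * u) := by
  rw [mem_skewPrim] at *
  rw [Bialgebra.comul_mul, hu.2, hx, add_mul, Algebra.TensorProduct.tmul_mul_tmul,
    Algebra.TensorProduct.tmul_mul_tmul]

lemma val_inv_mul (c : GroupLike K H) : (c⁻¹).val * c.val = 1 := by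
  rw [← GroupLike.val_mul, inv_mul_cancel, GroupLike.val_one]

lemma val_mul_inv (c : GroupLike K H) : c.val * (c⁻¹).val = 1 := by
  rw [← GroupLike.val_mul, mul_inv_cancel, GroupLike.val_one]

noncomputable def eL (c : GroupLike K H) : H ≃ₗ[K] H :=
  LinearEquiv.ofLinearMap (LinearMap.mulLeft K c.val) (LinearMap.mulLeft K (c⁻¹).val)
    (by ext x; simp only [LinearMap.comp_apply, LinearMap.mulLeft_apply, ← mul_assoc,
          val_mul_inv, one_mul, LinearMap.id_apply])
    (by ext x; simp only [LinearMap.comp_apply, LinearMap.mulLeft_apply, ← mul_assoc,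
          val_inv_mul, one_mul, LinearMap.id_apply])

lemma eL_apply (c : GroupLike K H) (x : H) : eL c x = c.val * x := rfl

lemma rank_skew_left (c : GroupLike K H) (g h : H) :
    Module.rank K (skewPrim K H (c.val * g) (c.val * h)) = Module.rank K (skewPrim K H g h) := by
  suffices key : skewPrim K H (c.val * g) (c.val * h) =
      Submodule.map (eL c : H →ₗ[K] H) (skewPrim K H g h) by
    rw [key]
    exact LinearEquiv.rank_map_eq (eL c) (skewPrim K H g h)
  ext x
  rw [Submodule.mem_map]
  constructor
  · intro hx
    refine ⟨(c⁻¹).val * x, ?_, ?_⟩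
    · have := skew_mul_left (gl c⁻¹) hx
      rwa [← mul_assoc, ← mul_assoc, val_inv_mul, one_mul, one_mul] at this
    · change c.val * ((c⁻¹).val * x) = x
      rw [← mul_assoc, val_mul_inv, one_mul]
  · rintro ⟨y, hy, rfl⟩
    exact skew_mul_left (gl c) hy

/-- nontrivial skew primitive -/
def Nt (g h : GroupLike K H) : Prop :=
  ∃ x ∈ skewPrim K H g.val h.val, x ∉ Submodule.span K {g.val - h.val}

lemma nt_mul_left {g h : GroupLike K H} (c : GroupLike K H) (hn : Nt g h) :
    Nt (c * g) (c * h) := by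
  obtain ⟨x, hx, hx'⟩ := hn
  refine ⟨c.val * x, skew_mul_left (gl c) hx, fun hm => hx' ?_⟩
  rw [Submodule.mem_span_singleton] at *
  obtain ⟨r, hr⟩ := hm
  refine ⟨r, ?_⟩
  have := congrArg (fun z => (c⁻¹).val * z) hr
  simpa only [GroupLike.val_mul, ← mul_sub, mul_smul_comm, ← mul_assoc, val_inv_mul,
    one_mul] using this

lemma nt_mul_right {g h : GroupLike K H} (c : GroupLike K H) (hn : Nt g h) :
    Nt (g * c) (h * c) := by
  obtain ⟨x, hx, hx'⟩ := hn
  refine ⟨x * c.val, skew_mul_right (gl c) hx, fun hm => hx' ?_⟩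
  rw [Submodule.mem_span_singleton] at *
  obtain ⟨r, hr⟩ := hm
  refine ⟨r, ?_⟩
  have := congrArg (fun z => z * (c⁻¹).val) hr
  simpa only [GroupLike.val_mul, ← sub_mul, smul_mul_assoc, mul_assoc, val_mul_inv,
    mul_one] using this

variable (K H) in
def SS : Set (GroupLike K H) := {c | Nt 1 c}

lemma nt_iff {g h : GroupLike K H} : Nt g h ↔ g⁻¹ * h ∈ SS K H := by
  constructor
  · intro hn
    have := nt_mul_left g⁻¹ hn
    rwa [inv_mul_cancel] at this
  · intro hn
    have := nt_mul_left g (show Nt 1 (g⁻¹ * h) from hn)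
    rwa [mul_one, mul_inv_cancel_left] at this

lemma SS_conj {c : GroupLike K H} (u : GroupLike K H) (hc : c ∈ SS K H) :
    u * c * u⁻¹ ∈ SS K H := by
  have h1 := nt_mul_right u⁻¹ (nt_mul_left u (show Nt 1 c from hc))
  rwa [mul_one, mul_inv_cancel] at h1

lemma tmul_mem_aux {D : Submodule K H} {a b : H} (ha : a ∈ D) (hb : b ∈ D) :
    a ⊗ₜ[K] b ∈ LinearMap.range (TensorProduct.map D.subtype D.subtype) :=
  ⟨(⟨a, ha⟩ : D) ⊗ₜ (⟨b, hb⟩ : D), by simp⟩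

lemma range_mono_aux {D D' : Submodule K H} (hD : D ≤ D') {z : H ⊗[K] H}
    (hz : z ∈ LinearMap.range (TensorProduct.map D.subtype D.subtype)) :
    z ∈ LinearMap.range (TensorProduct.map D'.subtype D'.subtype) := by
  obtain ⟨t, rfl⟩ := hz
  induction t with
  | zero => simp
  | tmul a b => exact tmul_mem_aux (hD a.2) (hD b.2)
  | add a b ha hb => rw [map_add]; exact Submodule.add_mem _ ha hb

lemma linkedIn_symm {D : Submodule K H} {g h : H} (hl : LinkedIn K H D g h) :
    LinkedIn K H D h g := by
  obtain ⟨x, hx, h1, h2⟩ := hl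
  refine ⟨x, hx, h1.symm, ?_⟩
  rwa [← neg_sub, ← Set.neg_singleton, Submodule.span_neg] 

lemma lic_mem {B : Submodule K H} (hB : IsLIC1 K H B) {g h x : H} (hg : IsGrouplike K H g)
    (hgB : g ∈ B) (hh : IsGrouplike K H h)
    (hx : x ∈ skewPrim K H g h ∨ x ∈ skewPrim K H h g) (hx' : x ∉ Submodule.span K {g - h}) :
    h ∈ B ∧ x ∈ B := by
  set B' : Submodule K H := B ⊔ Submodule.span K {h, x} with hB'
  have hBB : B ≤ B' := le_sup_left
  have hhB : h ∈ B' := Submodule.mem_sup_right (Submodule.subset_span (by simp))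
  have hxB : x ∈ B' := Submodule.mem_sup_right (Submodule.subset_span (by simp))
  suffices h0 : B' = B by
    rw [h0] at hhB hxB
    exact ⟨hhB, hxB⟩
  have hsub : IsSubcoalgebra K H B' := by
    have : B' ≤ Submodule.comap (Coalgebra.comul (R := K) (A := H))
        (LinearMap.range (TensorProduct.map B'.subtype B'.subtype)) := by
      refine sup_le ?_ ?_
      · intro b hb
        exact range_mono_aux hBB (hB.subcoalg b hb)
      · rw [Submodule.span_le]
        rintro y (rfl | rfl)
        · rw [SetLike.mem_coe, Submodule.mem_comap]
          rw [hh.2]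
          exact tmul_mem_aux hhB hhB
        · rw [SetLike.mem_coe, Submodule.mem_comap]
          rcases hx with hx | hx
          · rw [(mem_skewPrim K H).1 hx]
            exact Submodule.add_mem _ (tmul_mem_aux (hBB hgB) hxB) (tmul_mem_aux hxB hhB)
          · rw [(mem_skewPrim K H).1 hx]
            exact Submodule.add_mem _ (tmul_mem_aux hhB hxB) (tmul_mem_aux hxB (hBB hgB))
    exact this
  refine hB.maximal B' hsub ?_ hBB
  have hgr : ∀ p, IsGrouplike K H p → p ∈ B' → p ∈ B ∨ p = h := by
    intro p hp hpB
    by_contra hcon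
    push Not at hcon
    obtain ⟨hpnB, hph⟩ := hcon
    obtain ⟨f, hfp, hfB⟩ := Submodule.exists_le_ker_of_notMem hpnB
    have hfB' : ∀ b ∈ B, f b = 0 := fun b hb => hfB hb
    have hT : ∃ T : H ⊗[K] H →ₗ[K] H, (∀ b ∈ B, ∀ b' ∈ B, T (b ⊗ₜ b') = 0) ∧
        (∀ y, T (y ⊗ₜ y) = f y • y) ∧ T (Coalgebra.comul (R := K) x) ∈ Submodule.span K {h} := by
      rcases hx with hx | hx
      · refine ⟨(TensorProduct.lid K H).toLinearMap ∘ₗ LinearMap.rTensor H f, ?_, ?_, ?_⟩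
        · intro b hb b' hb'; simp [hfB' b hb]
        · intro y; simp
        · rw [(mem_skewPrim K H).1 hx]
          simp [hfB' g hgB]
          exact Submodule.smul_mem _ _ (Submodule.mem_span_singleton_self _)
      · refine ⟨(TensorProduct.rid K H).toLinearMap ∘ₗ LinearMap.lTensor H f, ?_, ?_, ?_⟩
        · intro b hb b' hb'; simp [hfB' b' hb']
        · intro y; simp
        · rw [(mem_skewPrim K H).1 hx]
          simp [hfB' g hgB]
          exact Submodule.smul_mem _ _ (Submodule.mem_span_singleton_self _)
    obtain ⟨T, hT1, hT2, hT3⟩ := hT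
    have hle : B' ≤ Submodule.comap (T ∘ₗ Coalgebra.comul (R := K) (A := H))
        (Submodule.span K {h}) := by
      refine sup_le ?_ ?_
      · intro b hb
        obtain ⟨t, ht⟩ := hB.subcoalg b hb
        rw [Submodule.mem_comap, LinearMap.comp_apply, ← ht]
        have : T (TensorProduct.map B.subtype B.subtype t) = 0 := by
          clear ht
          induction t with
          | zero => simp
          | tmul a b => simpa using hT1 a a.2 b b.2
          | add a b ha hb => rw [map_add, map_add, ha, hb, add_zero]
        rw [this]; exact zero_mem _
      · rw [Submodule.span_le]
        rintro y (rfl | rfl)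
        · rw [SetLike.mem_coe, Submodule.mem_comap, LinearMap.comp_apply]
          rw [hh.2, hT2]
          exact Submodule.smul_mem _ _ (Submodule.mem_span_singleton_self _)
        · exact hT3
    have h1 : T (Coalgebra.comul (R := K) p) ∈ Submodule.span K {h} := hle hpB
    rw [hp.2, hT2, Submodule.smul_mem_iff _ hfp, Submodule.mem_span_singleton] at h1
    obtain ⟨r, hr⟩ := h1
    have h2 := congrArg (Coalgebra.counit (R := K)) hr
    rw [map_smul, hh.1, hp.1, smul_eq_mul, mul_one] at h2
    rw [h2, one_smul] at hr
    exact hph hr.symm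
  have hpath : ∀ p, IsGrouplike K H p → p ∈ B' →
      Relation.ReflTransGen (LinkedIn K H B') p g := by
    intro p hp hpB
    rcases hgr p hp hpB with h1 | rfl
    · have hmono : ∀ a b, LinkedIn K H B a b → LinkedIn K H B' a b :=
        fun a b ⟨y, hy, hy'⟩ => ⟨y, hBB hy, hy'⟩
      exact Relation.ReflTransGen.mono hmono _ _ (hB.connected p g hp h1 hg hgB)
    · exact Relation.ReflTransGen.single (linkedIn_symm ⟨x, hxB, hx, hx'⟩)
  intro p q hp hpB hq hqB
  refine (hpath p hp hpB).trans ?_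
  have : Std.Symm (LinkedIn K H B') := ⟨fun _ _ h => linkedIn_symm h⟩
  exact Relation.ReflTransGen.stdSymm.symm _ _ (hpath q hq hqB)

lemma grouplike_of_left {g h x : H} (hg : IsGrouplike K H g) (hx : x ∈ skewPrim K H g h)
    (hx' : x ∉ Submodule.span K {g - h}) : IsGrouplike K H h := by
  have hx0 : x ≠ 0 := by rintro rfl; exact hx' (zero_mem _)
  rw [mem_skewPrim] at hx
  have h1 := Coalgebra.rTensor_counit_comul (R := K) x
  rw [hx, map_add, LinearMap.rTensor_tmul, LinearMap.rTensor_tmul, hg.1] at h1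
  have h2 := congrArg (TensorProduct.lid K H) h1
  simp at h2
  have h3 := Coalgebra.lTensor_counit_comul (R := K) x
  rw [hx, map_add, LinearMap.lTensor_tmul, LinearMap.lTensor_tmul] at h3
  have h4 := congrArg (TensorProduct.rid K H) h3
  simp at h4
  have hε : Coalgebra.counit (R := K) x = 0 := by
    rcases h2 with h2 | h2
    · exact h2
    · exfalso
      apply hx'
      rw [h2, map_zero, zero_smul, add_zero] at h4
      rw [h2, sub_zero, ← h4]
      exact Submodule.smul_mem _ _ (Submodule.mem_span_singleton_self _)
  rw [hε, zero_smul, zero_add] at h4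
  constructor
  · by_contra hne
    have : (Coalgebra.counit (R := K) h - 1) • x = 0 := by rw [sub_smul, h4, one_smul, sub_self]
    rcases smul_eq_zero.1 this with h5 | h5
    · exact hne (sub_eq_zero.1 h5)
    · exact hx0 h5
  · have h5 := Coalgebra.coassoc_apply (R := K) x
    rw [hx] at h5
    simp only [map_add, LinearMap.rTensor_tmul, LinearMap.lTensor_tmul, hg.2, hx,
      TensorProduct.add_tmul, TensorProduct.tmul_add, TensorProduct.assoc_tmul] at h5
    rw [add_assoc, add_right_inj, add_right_inj] at h5
    obtain ⟨f, hf, -⟩ := Submodule.exists_le_ker_of_notMem (p := (⊥ : Submodule K H))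
      (v := x) (by simpa using hx0)
    have h6 := congrArg ((TensorProduct.lid K (H ⊗[K] H)).toLinearMap ∘ₗ
      LinearMap.rTensor (H ⊗[K] H) f) h5
    simp only [LinearMap.comp_apply, LinearMap.rTensor_tmul, LinearEquiv.coe_coe,
      TensorProduct.lid_tmul] at h6
    exact (smul_right_injective _ hf h6).symm

lemma grouplike_of_right {g h x : H} (hg : IsGrouplike K H g) (hx : x ∈ skewPrim K H h g)
    (hx' : x ∉ Submodule.span K {g - h}) : IsGrouplike K H h := by
  have hx0 : x ≠ 0 := by rintro rfl; exact hx' (zero_mem _)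
  rw [mem_skewPrim] at hx
  have h1 := Coalgebra.lTensor_counit_comul (R := K) x
  rw [hx, map_add, LinearMap.lTensor_tmul, LinearMap.lTensor_tmul, hg.1] at h1
  have h2 := congrArg (TensorProduct.rid K H) h1
  simp at h2
  have h3 := Coalgebra.rTensor_counit_comul (R := K) x
  rw [hx, map_add, LinearMap.rTensor_tmul, LinearMap.rTensor_tmul] at h3
  have h4 := congrArg (TensorProduct.lid K H) h3
  simp at h4
  have hε : Coalgebra.counit (R := K) x = 0 := by
    rcases h2 with h2 | h2
    · exact h2
    · exfalso
      apply hx'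
      rw [h2, map_zero, zero_smul, zero_add] at h4
      rw [h2, sub_zero, ← h4]
      exact Submodule.smul_mem _ _ (Submodule.mem_span_singleton_self _)
  rw [hε, zero_smul, add_zero] at h4
  constructor
  · by_contra hne
    have : (Coalgebra.counit (R := K) h - 1) • x = 0 := by rw [sub_smul, h4, one_smul, sub_self]
    rcases smul_eq_zero.1 this with h5 | h5
    · exact hne (sub_eq_zero.1 h5)
    · exact hx0 h5
  · have h5 := Coalgebra.coassoc_symm_apply (R := K) x
    rw [hx] at h5
    simp only [map_add, LinearMap.rTensor_tmul, LinearMap.lTensor_tmul, hg.2, hx,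
      TensorProduct.add_tmul, TensorProduct.tmul_add, TensorProduct.assoc_symm_tmul] at h5
    rw [← add_assoc, add_left_inj, add_left_inj] at h5
    obtain ⟨f, hf, -⟩ := Submodule.exists_le_ker_of_notMem (p := (⊥ : Submodule K H))
      (v := x) (by simpa using hx0)
    have h6 := congrArg ((TensorProduct.rid K (H ⊗[K] H)).toLinearMap ∘ₗ
      LinearMap.lTensor (H ⊗[K] H) f) h5
    simp only [LinearMap.comp_apply, LinearMap.lTensor_tmul, LinearEquiv.coe_coe,
      TensorProduct.rid_tmul] at h6
    exact (smul_right_injective _ hf h6).symm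

lemma mem_span_swap {g h x : H} :
    x ∈ Submodule.span K {g - h} ↔ x ∈ Submodule.span K {h - g} := by
  rw [← neg_sub, ← Set.neg_singleton, Submodule.span_neg]

lemma closure_mem {B : Submodule K H} (hB : IsLIC1 K H B) (c : GroupLike K H) :
    c.val ∈ B ↔ c ∈ Subgroup.closure (SS K H) := by
  constructor
  · intro hc
    have hp := hB.connected 1 c.val ⟨by simp, by simp [Algebra.TensorProduct.one_def]⟩
      hB.one_mem (gl c) hc
    have : ∀ y, Relation.ReflTransGen (LinkedIn K H B) 1 y →
        ∃ d ∈ Subgroup.closure (SS K H), d.val = y := by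
      intro y hy
      induction hy with
      | refl => exact ⟨1, one_mem _, GroupLike.val_one⟩
      | tail _ hl ih =>
        obtain ⟨d, hd, rfl⟩ := ih
        obtain ⟨x, -, hx | hx, hx'⟩ := hl
        · have hg := grouplike_of_left (gl d) hx hx'
          refine ⟨⟨_, isGrouplike_iff'.1 hg⟩, ?_, rfl⟩
          have hn : Nt d ⟨_, isGrouplike_iff'.1 hg⟩ := ⟨x, hx, hx'⟩
          have := mul_mem hd (Subgroup.subset_closure (nt_iff.1 hn))
          rwa [mul_inv_cancel_left] at this
        · have hg := grouplike_of_right (gl d) hx hx'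
          refine ⟨⟨_, isGrouplike_iff'.1 hg⟩, ?_, rfl⟩
          have hn : Nt ⟨_, isGrouplike_iff'.1 hg⟩ d := ⟨x, hx, fun hm => hx' (mem_span_swap.1 hm)⟩
          have := mul_mem hd (inv_mem (Subgroup.subset_closure (nt_iff.1 hn)))
          rwa [mul_inv_rev, inv_inv, mul_inv_cancel_left] at this
    obtain ⟨d, hd, hdc⟩ := this _ hp
    rwa [GroupLike.val_injective hdc] at hd
  · intro hc
    induction hc using Subgroup.closure_induction_right with
    | one => rw [GroupLike.val_one]; exact hB.one_mem
    | mul_right x hx y hy ih =>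
      have hn : Nt x (x * y) := nt_iff.2 (by rwa [inv_mul_cancel_left])
      obtain ⟨z, hz, hz'⟩ := hn
      exact (lic_mem hB (gl x) ih (gl _) (Or.inl hz) hz').1
    | mul_inv_cancel x hx y hy ih =>
      have hn : Nt (x * y⁻¹) x := nt_iff.2 (by
        rw [mul_inv_rev, inv_inv, inv_mul_cancel_right]; exact hy)
      obtain ⟨z, hz, hz'⟩ := hn
      exact (lic_mem hB (gl x) ih (gl _) (Or.inr hz) (fun hm => hz' (mem_span_swap.1 hm))).1

lemma skew_le {B : Submodule K H} (hB : IsLIC1 K H B) {u v : H} (hu : grouplikeIn K H B u)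
    (hv : grouplikeIn K H B v) : skewPrim K H u v ≤ B := by
  intro x hx
  by_cases hx' : x ∈ Submodule.span K {u - v}
  · obtain ⟨r, rfl⟩ := Submodule.mem_span_singleton.1 hx'
    exact B.smul_mem _ (B.sub_mem hu.2 hv.2)
  · exact (lic_mem hB hu.1 hu.2 hv.1 (Or.inl hx) hx').2

lemma span_le_skew (g h : GroupLike K H) :
    Submodule.span K {g.val - h.val} ≤ skewPrim K H g.val h.val := by
  rw [Submodule.span_singleton_le_iff_mem, mem_skewPrim, map_sub, (gl g).2, (gl h).2,
    TensorProduct.tmul_sub, TensorProduct.sub_tmul]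
  abel

lemma rank_single_aux {y : H} (hy : y ≠ 0) : Module.rank K (Submodule.span K {y}) = 1 := by
  rw [← (LinearEquiv.toSpanNonzeroSingleton K H y hy).rank_eq, Module.rank_self]

lemma rank_one {c : GroupLike K H} [Infinite K] (hdisc : DiscreteCorepType K H) :
    Module.rank K (skewPrim K H 1 c.val) =
      if c = 1 then ((if c ∈ SS K H then 1 else 0 : ℕ) : Cardinal)
        else ((if c ∈ SS K H then 1 else 0 : ℕ) : Cardinal) + 1 := by
  have hle := span_le_skew (K := K) (H := H) 1 c
  rw [GroupLike.val_one] at hle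
  by_cases hc : c ∈ SS K H
  · obtain ⟨y, hy, hy'⟩ := hc
    have hc : c ∈ SS K H := ⟨y, hy, hy'⟩
    rw [GroupLike.val_one] at hy hy'
    have hP : skewPrim K H 1 c.val = Submodule.span K {y, 1 - c.val} := by
      apply le_antisymm
      · intro z hz
        by_contra hz'
        refine no_kronecker (X := y) (Y := z) hdisc (GroupLike.val_one (R := K) (A := H) ▸ gl 1)
          (gl c) hy hz ?_
        intro r s hrs
        obtain ⟨q, hq⟩ := Submodule.mem_span_singleton.1 hrs
        have hs : s = 0 := by
          by_contra hs
          apply hz'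
          rw [Submodule.mem_span_pair]
          refine ⟨-(s⁻¹ * r), s⁻¹ * q, ?_⟩
          rw [mul_smul, hq, smul_add, smul_smul, smul_smul, inv_mul_cancel₀ hs]
          simp
        refine ⟨?_, hs⟩
        by_contra hr
        apply hy'
        rw [hs, zero_smul, add_zero] at hrs
        exact (Submodule.smul_mem_iff _ hr).1 hrs
      · rw [Submodule.span_le]
        rintro z (rfl | rfl)
        · exact hy
        · exact hle (Submodule.mem_span_singleton_self _)
    rw [hP]
    by_cases h1 : c = 1
    · subst h1
      have hy0 : y ≠ 0 := by rintro rfl; exact hy' (zero_mem _)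
      have hz : (1 : H) - (1 : GroupLike K H).val = 0 := by rw [GroupLike.val_one, sub_self]
      rw [if_pos rfl, if_pos hc, hz, Set.pair_comm, Submodule.span_insert_zero,
        rank_single_aux hy0]
      simp
    · have hn : (1 : H) - c.val ≠ 0 := by
        intro h0
        exact h1 (GroupLike.val_injective (by rw [GroupLike.val_one]; exact (sub_eq_zero.1 h0).symm))
      have hli : LinearIndependent K ![y, 1 - c.val] := by
        rw [LinearIndependent.pair_iff]
        intro s t hst
        have hs : s = 0 := by
          by_contra hs
          apply hy'
          rw [← Submodule.smul_mem_iff _ hs, eq_neg_of_add_eq_zero_left hst]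
          exact neg_mem (Submodule.smul_mem _ _ (Submodule.mem_span_singleton_self _))
        refine ⟨hs, ?_⟩
        rw [hs, zero_smul, zero_add] at hst
        exact (smul_eq_zero.1 hst).resolve_right hn
      have := rank_span hli
      rw [Cardinal.mk_range_eq _ hli.injective, Matrix.range_cons, Matrix.range_cons,
        Matrix.range_empty, Set.union_empty, Set.singleton_union] at this
      rw [this, if_neg h1, if_pos hc, Cardinal.mk_fin]
      norm_num
  · have hP : skewPrim K H 1 c.val = Submodule.span K {1 - c.val} := by
      refine le_antisymm ?_ hle
      intro z hz
      by_contra hz'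
      exact hc ⟨z, by rwa [GroupLike.val_one], by rwa [GroupLike.val_one]⟩
    rw [hP, if_neg hc]
    by_cases h1 : c = 1
    · subst h1
      simp
    · have hn : (1 : H) - c.val ≠ 0 := by
        intro h0
        exact h1 (GroupLike.val_injective (by rw [GroupLike.val_one]; exact (sub_eq_zero.1 h0).symm))
      rw [if_neg h1, rank_single_aux hn]
      simp

end HopfAux
section Final

variable {K : Type} [Field K] {H : Type} [Ring H] [HopfAlgebra K H]

lemma arrows_aux [Infinite K] (hdisc : DiscreteCorepType K H) {B : Submodule K H}
    (hB : IsLIC1 K H B) (u v : GroupLike K H) (hu : u.val ∈ B) (hv : v.val ∈ B) (p : Prop)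
    [Decidable p] (hp : u⁻¹ * v ∈ SS K H ↔ p) :
    arrowsEq K H B u.val v.val (if p then 1 else 0) := by
  have h1 : u.val = u.val * 1 := (mul_one _).symm
  have h2 : v.val = u.val * (u⁻¹ * v).val := by rw [← GroupLike.val_mul, mul_inv_cancel_left]
  have h3 : u⁻¹ * v = 1 ↔ u.val = v.val := by
    rw [inv_mul_eq_one]
    exact ⟨fun h => by rw [h], fun h => GroupLike.val_injective h⟩
  have h4 : Module.rank K (skewPrim K H u.val v.val) =
      Module.rank K (skewPrim K H 1 (u⁻¹ * v).val) := by
    rw [← rank_skew_left u 1 (u⁻¹ * v).val, ← h2, ← h1]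
  rw [arrowsEq, inf_eq_left.2 (skew_le hB ⟨gl u, hu⟩ ⟨gl v, hv⟩), h4, rank_one hdisc]
  by_cases hq : p
  · rw [if_pos (hp.2 hq), if_pos hq]
    by_cases h5 : u.val = v.val
    · rw [if_pos (h3.2 h5), if_pos h5]
    · rw [if_neg (mt h3.1 h5), if_neg h5]
  · rw [if_neg (mt hp.1 hq), if_neg hq]
    by_cases h5 : u.val = v.val
    · rw [if_pos (h3.2 h5), if_pos h5]
    · rw [if_neg (mt h3.1 h5), if_neg h5]

lemma val_ne {a b : GroupLike K H} (h : a ≠ b) : a.val ≠ b.val :=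
  fun h' => h (GroupLike.val_injective h')

lemma ss_three [Infinite K] (hdisc : DiscreteCorepType K H) {a b c : GroupLike K H}
    (ha : a ∈ SS K H) (hb : b ∈ SS K H) (hc : c ∈ SS K H) (hab : a ≠ b) (hac : a ≠ c)
    (hbc : b ≠ c) : False := by
  have n1 : Nt (a * b⁻¹) a := nt_iff.2 (by simpa using hb)
  have n2 : Nt (a * c⁻¹) a := nt_iff.2 (by simpa using hc)
  obtain ⟨ya, hya, hya'⟩ := (show Nt 1 a from ha)
  obtain ⟨yb, hyb, hyb'⟩ := (show Nt 1 b from hb)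
  obtain ⟨yc, hyc, hyc'⟩ := (show Nt 1 c from hc)
  obtain ⟨z1, hz1, hz1'⟩ := n1
  obtain ⟨z2, hz2, hz2'⟩ := n2
  refine no_dtilde hdisc (gl 1) (gl (a * b⁻¹)) (gl (a * c⁻¹)) (gl a) (gl b) (gl c)
    (val_ne ?_) (val_ne ?_) (val_ne ?_) (val_ne hab) (val_ne hac) (val_ne hbc)
    hya hyb hyc hz1 hz2 hya' hyb' hyc' hz1' hz2'
  · intro h; exact hab (mul_inv_eq_one.1 h.symm)
  · intro h; exact hac (mul_inv_eq_one.1 h.symm)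
  · intro h; exact hbc (inv_injective (mul_left_cancel h))

lemma ss_inf [Infinite K] (hdisc : DiscreteCorepType K H) {a b : GroupLike K H}
    (ha : a ∈ SS K H) (hb : b ∈ SS K H) (hab : a ≠ b) : orderOf (a * b⁻¹) = 0 := by
  by_contra h0
  have h1 : orderOf (a * b⁻¹) ≠ 1 := fun h => hab (mul_inv_eq_one.1 (orderOf_eq_one_iff.1 h))
  obtain ⟨n, hn⟩ : ∃ n, orderOf (a * b⁻¹) = n + 2 :=
    ⟨orderOf (a * b⁻¹) - 2, by omega⟩
  set t := a * b⁻¹ with ht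
  have hta : t⁻¹ * a = b := by rw [ht, mul_inv_rev, inv_inv, inv_mul_cancel_right]
  have hX : ∀ j : Fin (n + 2), Nt (t ^ j.val) (t ^ j.val * a) := fun j =>
    nt_iff.2 (by rwa [inv_mul_cancel_left])
  have hs : ∀ j : Fin (n + 2), t ^ (j + 1).val = t ^ j.val * t := by
    intro j
    have hm := pow_mod_orderOf t (j.val + 1)
    rw [hn] at hm
    rw [Fin.val_add, Fin.val_one, hm, pow_succ]
  have hY : ∀ j : Fin (n + 2), Nt (t ^ (j + 1).val) (t ^ j.val * a) := fun j =>
    nt_iff.2 (by rwa [hs, mul_inv_rev, mul_assoc, inv_mul_cancel_left, hta])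
  choose X hX1 hX2 using hX
  choose Y hY1 hY2 using hY
  have hinj : Function.Injective (fun j : Fin (n + 2) => t ^ j.val) := by
    intro i j hij
    have := pow_inj_mod.1 hij
    rw [hn, Nat.mod_eq_of_lt i.2, Nat.mod_eq_of_lt j.2] at this
    exact Fin.ext this
  refine no_cycle hdisc (fun j : Fin (n + 2) => (t ^ j.val).val) (fun j => (t ^ j.val * a).val) X Y
    (fun j => gl _) (fun j => gl _) ?_ ?_ hX1 hY1 hX2 hY2
  · exact GroupLike.val_injective.comp hinj
  · intro i j hij
    exact hinj (mul_right_cancel (GroupLike.val_injective hij))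

lemma zp_val (a : GroupLike K H) (i : ℤ) : zp a.val (inv' K H a.val) i = (a ^ i).val := by
  have h : inv' K H a.val = (a⁻¹).val := rfl
  rw [h]
  cases i with
  | ofNat n => simp [zp]
  | negSucc n =>
    rw [zp, zpow_negSucc, ← inv_pow, GroupLike.val_pow]
    simp [Int.neg_negSucc]

lemma rel_cyclic {G : Type} [Group G] {a b : G} (hc : Commute a b)
    (h0 : orderOf (a * b⁻¹) = 0) :
    ∃ m n : ℤ, ∀ i j : ℤ, a ^ i * b ^ j = 1 ↔ ∃ l : ℤ, i = l * m ∧ j = -(l * n) := by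
  have hmul : ∀ i j i' j' : ℤ, a ^ (i + i') * b ^ (j + j') = (a ^ i * b ^ j) * (a ^ i' * b ^ j') := by
    intro i j i' j'
    rw [zpow_add, zpow_add, mul_assoc, mul_assoc, ← mul_assoc (a ^ i'), ← mul_assoc (b ^ j),
      ((hc.zpow_zpow i' j).eq)]
  let S : AddSubgroup ℤ :=
    { carrier := {k | ∃ i j : ℤ, a ^ i * b ^ j = 1 ∧ i + j = k}
      zero_mem' := ⟨0, 0, by simp⟩
      add_mem' := by
        rintro _ _ ⟨i, j, h, rfl⟩ ⟨i', j', h', rfl⟩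
        exact ⟨i + i', j + j', by rw [hmul, h, h', mul_one], by ring⟩
      neg_mem' := by
        rintro _ ⟨i, j, h, rfl⟩
        refine ⟨-i, -j, ?_, by ring⟩
        have := hmul i j (-i) (-j)
        rw [h, one_mul, add_neg_cancel, add_neg_cancel, zpow_zero, zpow_zero, mul_one] at this
        exact this.symm }
  obtain ⟨k, hk⟩ := Int.subgroup_cyclic S
  have hkS : k ∈ S := by rw [hk]; exact AddSubgroup.subset_closure rfl
  obtain ⟨m, n, hmn, hsum⟩ := hkS
  have hpow : ∀ l : ℤ, a ^ (l * m) * b ^ (l * n) = 1 := by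
    intro l
    rw [mul_comm l, mul_comm l, zpow_mul, zpow_mul, ← (hc.zpow_zpow m n).mul_zpow, hmn, one_zpow]
  refine ⟨m, -n, fun i j => ⟨fun hij => ?_, ?_⟩⟩
  · have : i + j ∈ S := ⟨i, j, hij, rfl⟩
    rw [hk, AddSubgroup.mem_closure_singleton] at this
    obtain ⟨l, hl⟩ := this
    rw [smul_eq_mul] at hl
    refine ⟨l, ?_⟩
    have h1 : a ^ (i + -l * m) * b ^ (j + -l * n) = 1 := by rw [hmul, hij, hpow, mul_one]
    have h2 : j + -l * n = -(i + -l * m) := by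
      have : l * k = l * m + l * n := by rw [← hsum]; ring
      linarith
    rw [h2, zpow_neg, ← inv_zpow, ← hc.inv_right.mul_zpow] at h1
    have h3 : i + -l * m = 0 := by
      have := orderOf_dvd_iff_zpow_eq_one.2 h1
      rw [h0] at this
      simpa using this
    constructor
    · linarith
    · rw [h3] at h2; linarith
  · rintro ⟨l, rfl, rfl⟩
    have : -(l * -n) = l * n := by ring
    rw [this, hpow]

lemma cl_single {a g : GroupLike K H} (h : SS K H = {a}) :
    g ∈ Subgroup.closure (SS K H) ↔ ∃ i : ℤ, a ^ i = g := by
  rw [h, Subgroup.mem_closure_singleton]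

lemma lift_gl {B : Submodule K H} {g : H} (hg : grouplikeIn K H B g) :
    ∃ u : GroupLike K H, u.val = g ∧ u.val ∈ B :=
  ⟨⟨g, isGrouplike_iff'.1 hg.1⟩, rfl, hg.2⟩

lemma single_case [Infinite K] (hdisc : DiscreteCorepType K H) {B : Submodule K H}
    (hB : IsLIC1 K H B) {a : GroupLike K H} (hS : SS K H = {a}) :
    CycleQuiver K H B ∨ LineQuiver K H B := by
  have haB : a.val ∈ B := (closure_mem hB a).2 ((cl_single hS).2 ⟨1, zpow_one a⟩)
  have harr : ∀ g h : H, grouplikeIn K H B g → grouplikeIn K H B h →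
      arrowsEq K H B g h (if h = g * a.val then 1 else 0) := by
    intro g h hg hh
    obtain ⟨u, rfl, hu⟩ := lift_gl hg
    obtain ⟨v, rfl, hv⟩ := lift_gl hh
    refine arrows_aux hdisc hB u v hu hv _ ?_
    rw [hS, Set.mem_singleton_iff, inv_mul_eq_iff_eq_mul, ← GroupLike.val_mul]
    exact GroupLike.val_injective.eq_iff.symm
  have hpow1 : ∀ k : ℕ, a.val ^ k = 1 ↔ a ^ k = 1 := by
    intro k
    rw [← GroupLike.val_pow, ← GroupLike.val_one (R := K) (A := H)]
    exact GroupLike.val_injective.eq_iff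
  rcases Nat.eq_zero_or_pos (orderOf a) with h0 | h0
  · right
    refine ⟨a.val, ⟨gl a, haB⟩, ?_, ?_, harr⟩
    · intro k hk hk1
      exact orderOf_eq_zero_iff'.1 h0 k hk ((hpow1 k).1 hk1)
    · intro g
      constructor
      · intro hg
        obtain ⟨u, rfl, hu⟩ := lift_gl hg
        obtain ⟨i, hi⟩ := (cl_single hS).1 ((closure_mem hB u).1 hu)
        refine ⟨(-i).toNat, i.toNat, ?_⟩
        rw [← GroupLike.val_pow, ← GroupLike.val_pow, ← GroupLike.val_mul, ← hi,
          ← zpow_natCast, ← zpow_natCast, ← zpow_add]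
        congr 2
        omega
      · rintro ⟨i, j, hij⟩
        have hg : g = ((a ^ i)⁻¹ * a ^ j).val := by
          rw [GroupLike.val_mul, GroupLike.val_pow a j, ← hij, ← GroupLike.val_pow, ← mul_assoc,
            val_inv_mul, one_mul]
        rw [hg]
        refine ⟨gl _, (closure_mem hB _).2 ((cl_single hS).2 ⟨-i + j, ?_⟩)⟩
        rw [zpow_add, zpow_neg, zpow_natCast, zpow_natCast]
  · left
    refine ⟨a.val, orderOf a, h0, ⟨gl a, haB⟩, (hpow1 _).2 (pow_orderOf_eq_one a), ?_, ?_, harr⟩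
    · intro k hk hk' hk1
      exact absurd (orderOf_le_of_pow_eq_one hk ((hpow1 k).1 hk1)) (not_le.2 hk')
    · intro g
      constructor
      · intro hg
        obtain ⟨u, rfl, hu⟩ := lift_gl hg
        obtain ⟨i, hi⟩ := (cl_single hS).1 ((closure_mem hB u).1 hu)
        refine ⟨(i % (orderOf a : ℤ)).toNat, ?_⟩
        have hnn : 0 ≤ i % (orderOf a : ℤ) := Int.emod_nonneg _ (by omega)
        rw [← GroupLike.val_pow, ← hi, ← zpow_natCast, Int.toNat_of_nonneg hnn, zpow_mod_orderOf]
      · rintro ⟨i, rfl⟩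
        rw [← GroupLike.val_pow]
        exact ⟨gl _, (closure_mem hB _).2 ((cl_single hS).2 ⟨i, zpow_natCast a i⟩)⟩

lemma grid_case [Infinite K] (hdisc : DiscreteCorepType K H) {B : Submodule K H}
    (hB : IsLIC1 K H B) {a b : GroupLike K H} (hab : a ≠ b) (hS : SS K H = {a, b}) :
    ∃ (a b : H) (m n : ℤ), ((m, n) : ℤ × ℤ) ≠ (1, 1) ∧ ((m, n) : ℤ × ℤ) ≠ (-1, -1) ∧
        GridQuiverOn K H B a b m n := by
  have ha : a ∈ SS K H := by rw [hS]; simp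
  have hb : b ∈ SS K H := by rw [hS]; simp
  have h0 := ss_inf hdisc ha hb hab
  have hc : Commute a b := by
    have h1 := SS_conj a hb
    rw [hS] at h1
    rcases h1 with h1 | h1
    · exfalso
      have h2 : a * b = a * a := mul_inv_eq_iff_eq_mul.1 h1
      exact hab (mul_left_cancel h2).symm
    · exact mul_inv_eq_iff_eq_mul.1 h1
  obtain ⟨m, n, hmn⟩ := rel_cyclic hc h0
  have hne : a * b⁻¹ ≠ 1 := fun h => hab (mul_inv_eq_one.1 h)
  have hcl : ∀ g : GroupLike K H, g ∈ Subgroup.closure (SS K H) ↔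
      ∃ i j : ℤ, g = a ^ i * b ^ j := by
    intro g
    constructor
    · intro hg
      induction hg using Subgroup.closure_induction with
      | mem x hx =>
        rw [hS] at hx
        rcases hx with rfl | rfl
        · exact ⟨1, 0, by simp⟩
        · exact ⟨0, 1, by simp⟩
      | one => exact ⟨0, 0, by simp⟩
      | mul x y _ _ hx hy =>
        obtain ⟨i, j, rfl⟩ := hx
        obtain ⟨i', j', rfl⟩ := hy
        refine ⟨i + i', j + j', ?_⟩
        rw [zpow_add, zpow_add, mul_assoc, mul_assoc, ← mul_assoc (a ^ i'), ← mul_assoc (b ^ j),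
          ((hc.zpow_zpow i' j).eq)]
      | inv x _ hx =>
        obtain ⟨i, j, rfl⟩ := hx
        refine ⟨-i, -j, ?_⟩
        rw [mul_inv_rev, zpow_neg, zpow_neg, ((hc.zpow_zpow i j).inv_inv).eq]
    · rintro ⟨i, j, rfl⟩
      exact mul_mem (zpow_mem (Subgroup.subset_closure ha) i)
        (zpow_mem (Subgroup.subset_closure hb) j)
  have haB : a.val ∈ B := (closure_mem hB a).2 (Subgroup.subset_closure ha)
  have hbB : b.val ∈ B := (closure_mem hB b).2 (Subgroup.subset_closure hb)
  refine ⟨a.val, b.val, m, n, ?_, ?_, ⟨gl a, haB⟩, ⟨gl b, hbB⟩, ?_, val_mul_inv a,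
    val_inv_mul a, val_mul_inv b, val_inv_mul b, ?_, ?_, ?_⟩
  · intro h
    rw [Prod.mk.injEq] at h
    apply hne
    have := (hmn 1 (-1)).2 ⟨1, by rw [h.1]; rfl, by rw [h.2]; rfl⟩
    simpa using this
  · intro h
    rw [Prod.mk.injEq] at h
    apply hne
    have := (hmn 1 (-1)).2 ⟨-1, by rw [h.1]; rfl, by rw [h.2]; rfl⟩
    simpa using this
  · rw [← GroupLike.val_mul, ← GroupLike.val_mul, hc.eq]
  · intro i j
    rw [zp_val, zp_val, ← hmn i j, ← GroupLike.val_mul, ← GroupLike.val_one (R := K) (A := H)]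
    exact GroupLike.val_injective.eq_iff
  · intro g
    simp only [zp_val, ← GroupLike.val_mul]
    constructor
    · intro hg
      obtain ⟨u, rfl, hu⟩ := lift_gl hg
      obtain ⟨i, j, hij⟩ := (hcl u).1 ((closure_mem hB u).1 hu)
      exact ⟨i, j, by rw [hij]⟩
    · rintro ⟨i, j, rfl⟩
      exact ⟨gl _, (closure_mem hB _).2 ((hcl _).2 ⟨i, j, rfl⟩)⟩
  · intro g h hg hh
    obtain ⟨u, rfl, hu⟩ := lift_gl hg
    obtain ⟨v, rfl, hv⟩ := lift_gl hh
    refine arrows_aux hdisc hB u v hu hv _ ?_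
    rw [hS, Set.mem_insert_iff, Set.mem_singleton_iff, inv_mul_eq_iff_eq_mul,
      inv_mul_eq_iff_eq_mul, ← GroupLike.val_mul, ← GroupLike.val_mul]
    exact or_congr GroupLike.val_injective.eq_iff.symm GroupLike.val_injective.eq_iff.symm

end Final

theorem ext_quiver_of_discrete_pointed_hopf
    (K : Type) [Field K] [IsAlgClosed K]
    (H : Type) [Ring H] [HopfAlgebra K H]
    (hpointed : IsPointedCoalgebra K H) (hdiscrete : DiscreteCorepType K H)
    (B : Submodule K H) (hB : IsLIC1 K H B) :
    (SingleVertexQuiver K H B ∨ CycleQuiver K H B ∨ LineQuiver K H B ∨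
      (∃ (a b : H) (m n : ℤ), ((m, n) : ℤ × ℤ) ≠ (1, 1) ∧ ((m, n) : ℤ × ℤ) ≠ (-1, -1) ∧
        GridQuiverOn K H B a b m n)) ∧
    -- moreover, the Ext-quiver of `H`-comodules is a disjoint union of copies of this quiver:
    -- all arrows stay within left cosets of `G(B)`...
    (∀ g h : H, IsGrouplike K H g → IsGrouplike K H h →
        ¬ (skewPrim K H g h ≤ Submodule.span K {g - h}) →
        ∃ c : H, grouplikeIn K H B c ∧ h = g * c) ∧
    -- ...and the quiver on each coset is a copy of the Ext-quiver of `B` via translation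
    (∀ g u v : H, IsGrouplike K H g → grouplikeIn K H B u → grouplikeIn K H B v →
        Module.rank K ↥(skewPrim K H (g * u) (g * v)) =
          Module.rank K ↥(skewPrim K H u v ⊓ B)) := by
  refine ⟨?_, ?_, ?_⟩
  · by_cases h0 : ∃ a, a ∈ SS K H
    · obtain ⟨a, ha⟩ := h0
      by_cases h1 : ∃ b ∈ SS K H, a ≠ b
      · obtain ⟨b, hb, hab⟩ := h1
        right; right; right
        refine grid_case hdiscrete hB hab ?_
        ext c
        constructor
        · intro hc
          by_contra hcon
          rw [Set.mem_insert_iff, Set.mem_singleton_iff, not_or] at hcon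
          exact ss_three hdiscrete ha hb hc hab (Ne.symm hcon.1) (Ne.symm hcon.2)
        · rintro (rfl | rfl)
          · exact ha
          · exact hb
      · have hS : SS K H = {a} := by
          ext c
          constructor
          · intro hc
            by_contra hcon
            exact h1 ⟨c, hc, fun h => hcon h.symm⟩
          · rintro rfl
            exact ha
        rcases single_case hdiscrete hB hS with h | h
        · exact Or.inr (Or.inl h)
        · exact Or.inr (Or.inr (Or.inl h))
    · left
      have hS : SS K H = ∅ := Set.eq_empty_iff_forall_notMem.2 (fun a ha => h0 ⟨a, ha⟩)
      have h1B : (1 : GroupLike K H).val ∈ B := by rw [GroupLike.val_one]; exact hB.one_mem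
      constructor
      · intro g
        constructor
        · intro hg
          obtain ⟨u, rfl, hu⟩ := lift_gl hg
          have := (closure_mem hB u).1 hu
          rw [hS, Subgroup.closure_empty, Subgroup.mem_bot] at this
          rw [this, GroupLike.val_one]
        · rintro rfl
          rw [← GroupLike.val_one (R := K) (A := H)]
          exact ⟨gl 1, h1B⟩
      · have := arrows_aux hdiscrete hB 1 1 h1B h1B False (by rw [hS]; simp)
        rw [if_neg not_false, GroupLike.val_one] at this
        exact this
  · intro g h hg hh hn
    obtain ⟨x, hx, hx'⟩ := SetLike.not_le_iff_exists.1 hn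
    let u : GroupLike K H := ⟨g, isGrouplike_iff'.1 hg⟩
    let v : GroupLike K H := ⟨h, isGrouplike_iff'.1 hh⟩
    have hnt : Nt u v := ⟨x, hx, hx'⟩
    refine ⟨(u⁻¹ * v).val, ⟨gl _, (closure_mem hB _).2
      (Subgroup.subset_closure (nt_iff.1 hnt))⟩, ?_⟩
    change v.val = u.val * (u⁻¹ * v).val
    rw [← GroupLike.val_mul, mul_inv_cancel_left]
  · intro g u v hg hu hv
    rw [inf_eq_left.2 (skew_le hB hu hv)]
    exact rank_skew_left ⟨g, isGrouplike_iff'.1 hg⟩ u v
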